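/- Let ε > 0 be fixed, let p > 2 be a fixed prime, and let α₁, α₂, α₃ be fixed integers coprime to p with p > s_p(α₁,α₂,α₃). Let Φ : ℝ → ℝ be a nonnegative Schwartz-class function. For each n ∈ ℕ set q := pⁿ and let N = N(n) be any real number with N ≥ q^{1/2+ε}. Then, as n → ∞, the quantity (q/N³) · Σ_{(x₁,x₂,x₃) ∈ ℤ³, gcd(x₁x₂x₃,p)=1, α₁x₁²+α₂x₂²+α₃x₃² ≡ 0 (mod q)} Φ(x₁/N)Φ(x₂/N)Φ(x₃/N) converges to Φ̂(0)³ · C_p(α₁,α₂,α₃). -/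

import Mathlib

open Filter MeasureTheory
open scoped FourierTransform SchwartzMap Matrix

/-!
Let `q = p ^ n`. Poisson summation in each residue class modulo `q` turns the normalized count into
`q⁻² ∑ₘ ∏ᵢ 𝓕 Φ (N mᵢ / q) S(m)`, where `S(m)` is the exponential sum with phase `m ⬝ x / q` over
the zeros `x` modulo `q` with unit coordinates. The frequency `m = 0` gives the main term: such
zeros are counted modulo `p`, and those modulo `q` by lifting through square-zero extensions.

For `m ≠ 0`, translating `x` by square-zero multiples of rotations tangent to the quadric, and
rescaling it, shows that `S(m)` only sees the points at which the phase is stationary. These force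
`m = p ^ k m'` with the dual form of `m'` divisible by a power of `p`. The Schwartz decay of `𝓕 Φ`
leaves only frequencies a little shorter than `q ^ (1 / 2)`, for which the dual form is too small
to be divisible by that power without vanishing. So `m` lies on the dual cone, which has
`O(R log R)` integral points of height at most `R`, too few to contribute to the limit.
-/

section DiagonalForms

open Finset

variable {R ι : Type*} [CommRing R] [Fintype ι]

/-- The diagonal quadratic form `∑ αᵢ xᵢ²`. -/
def diagForm (α x : ι → R) : R := ∑ i, α i * x i ^ 2

lemma diagForm_add_smul (α x v : ι → R) (c : R) :
    diagForm α (x + c • v) = diagForm α x + 2 * c * (α * x) ⬝ᵥ v + c ^ 2 * diagForm α v := by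
  simp only [diagForm, dotProduct, mul_sum, ← sum_add_distrib]
  refine sum_congr rfl fun i _ => ?_
  simp only [Pi.add_apply, Pi.smul_apply, Pi.mul_apply, smul_eq_mul]
  ring

lemma diagForm_smul (α x : ι → R) (c : R) : diagForm α (c • x) = c ^ 2 * diagForm α x := by
  simp only [diagForm, mul_sum, Pi.smul_apply, smul_eq_mul, mul_pow, mul_left_comm]

lemma map_diagForm {S : Type*} [CommRing S] (φ : R →+* S) (α x : ι → R) :
    φ (diagForm α x) = diagForm (φ ∘ α) (φ ∘ x) := by
  simp [diagForm]

variable [Fintype R]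

open scoped Classical in
/-- The zeros of the diagonal form with coefficients `α` all of whose coordinates are units. -/
noncomputable def unitZeros (α : ι → R) : Finset (ι → R) :=
  {x | (∀ i, IsUnit (x i)) ∧ diagForm α x = 0}

lemma mem_unitZeros {α x : ι → R} :
    x ∈ unitZeros α ↔ (∀ i, IsUnit (x i)) ∧ diagForm α x = 0 := by
  simp [unitZeros]

lemma smul_mem_unitZeros {α x : ι → R} {c : R} (hc : IsUnit c) (hx : x ∈ unitZeros α) :
    c • x ∈ unitZeros α := by
  rw [mem_unitZeros] at hx ⊢
  exact ⟨fun i => hc.mul (hx.1 i), by rw [diagForm_smul, hx.2, mul_zero]⟩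

lemma add_smul_mem_unitZeros {α x v : ι → R} {c : R} (hc : c ^ 2 = 0) (hx : x ∈ unitZeros α)
    (hv : (α * x) ⬝ᵥ v = 0) : x + c • v ∈ unitZeros α := by
  rw [mem_unitZeros] at hx ⊢
  refine ⟨fun i => ?_, by rw [diagForm_add_smul, hx.2, hv, hc]; ring⟩
  have hnil : IsNilpotent ((c • v) i) := ⟨2, by simp [mul_pow, hc]⟩
  exact hnil.isUnit_add_left_of_commute (hx.1 i) (Commute.all _ _)

end DiagonalForms

section Localization

open Finset

variable {R : Type*} [CommRing R] [Finite R] [DecidableEq R] {ψ : AddChar R ℂ}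

lemma sum_addChar_eq_sum_filter {X : Type*} (hψ : ψ.IsPrimitive) (S : Finset X) (f L : X → R)
    (σ : R → X → X) (hmaps : ∀ t, ∀ a ∈ S, σ t a ∈ S) (hinj : ∀ t, Set.InjOn (σ t) S)
    (hf : ∀ t, ∀ a ∈ S, f (σ t a) = f a + t * L a) :
    ∑ a ∈ S, ψ (f a) = ∑ a ∈ S with L a = 0, ψ (f a) := by
  have := Fintype.ofFinite R
  have hcard : (Fintype.card R : ℂ) ≠ 0 := Nat.cast_ne_zero.mpr Fintype.card_ne_zero
  have hshift (t : R) : ∑ a ∈ S, ψ (f a) = ∑ a ∈ S, ψ (f a) * ψ (t * L a) := by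
    have hsurj : Set.SurjOn (σ t) S S :=
      surjOn_of_injOn_of_card_le (σ t) (hmaps t) (hinj t) le_rfl
    rw [← sum_nbij (σ t) (hmaps t) (hinj t) hsurj (fun a _ => rfl)]
    exact sum_congr rfl fun a ha => by rw [hf t a ha, AddChar.map_add_eq_mul]
  refine mul_left_cancel₀ hcard ?_
  calc (Fintype.card R : ℂ) * ∑ a ∈ S, ψ (f a) = ∑ _t : R, ∑ a ∈ S, ψ (f a) := by simp
    _ = ∑ t : R, ∑ a ∈ S, ψ (f a) * ψ (t * L a) := sum_congr rfl fun t _ => hshift t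
    _ = ∑ a ∈ S, ψ (f a) * ∑ t : R, ψ (t * L a) := by
        rw [sum_comm]
        simp_rw [mul_sum]
    _ = Fintype.card R * ∑ a ∈ S with L a = 0, ψ (f a) := by
        simp_rw [AddChar.sum_mulShift _ hψ, sum_filter, mul_sum]
        refine sum_congr rfl fun a _ => ?_
        split_ifs <;> simp [mul_comm]

lemma sum_addChar_eq_sum_filter_forall {X κ : Type*} [Fintype κ] (hψ : ψ.IsPrimitive)
    (S : Finset X) (f : X → R) (L : κ → X → R) (σ : κ → R → X → X)
    (hmaps : ∀ k t, ∀ a ∈ S, σ k t a ∈ S) (hinj : ∀ k t, Set.InjOn (σ k t) S)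
    (hf : ∀ k t, ∀ a ∈ S, f (σ k t a) = f a + t * L k a)
    (hL : ∀ k l t, ∀ a ∈ S, L l (σ k t a) = L l a) :
    ∑ a ∈ S, ψ (f a) = ∑ a ∈ S with ∀ k, L k a = 0, ψ (f a) := by
  classical
  suffices h : ∀ T : Finset κ,
      ∑ a ∈ S, ψ (f a) = ∑ a ∈ S with ∀ k ∈ T, L k a = 0, ψ (f a) by
    simpa using h univ
  intro T
  induction T using Finset.induction_on with
  | empty => simp
  | insert k T _ ih =>
    have hsub : (S.filter fun a => ∀ l ∈ T, L l a = 0) ⊆ S := filter_subset _ _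
    rw [ih, sum_addChar_eq_sum_filter hψ _ f (L k) (σ k) _
      (fun t => (hinj k t).mono hsub) (fun t a ha => hf k t a (hsub ha)), filter_filter]
    · exact sum_congr (filter_congr fun a _ => by simp [and_comm]) fun _ _ => rfl
    · intro t a ha
      rw [mem_filter] at ha ⊢
      exact ⟨hmaps k t a ha.1, fun l hl => by rw [hL k l t a ha.1, ha.2 l hl]⟩

end Localization

section UnitZeros

open Finset

variable {R ι : Type*} [CommRing R] [DecidableEq ι]

/-- The infinitesimal rotation in the `i`-th and `j`-th coordinates, a vector field tangent to
the quadric `diagForm α = 0`. -/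
def tangentRotation (α : ι → R) (i j : ι) : (ι → R) →ₗ[R] (ι → R) :=
  α j • LinearMap.single R (fun _ => R) i ∘ₗ LinearMap.proj j -
    α i • LinearMap.single R (fun _ => R) j ∘ₗ LinearMap.proj i

lemma smul_tangentRotation_add_smul (α x v : ι → R) (i j : ι) {c : R} (hc : c ^ 2 = 0) (t : R) :
    c • tangentRotation α i j (x + (c * t) • v) = c • tangentRotation α i j x := by
  have hct : c * (c * t) = 0 := by linear_combination t * hc
  rw [map_add, map_smul, smul_add, smul_smul, hct, zero_smul, add_zero]

variable [Fintype ι]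

lemma dotProduct_tangentRotation (m α x : ι → R) (i j : ι) :
    m ⬝ᵥ tangentRotation α i j x = m i * (α j * x j) - m j * (α i * x i) := by
  simp [tangentRotation, dotProduct_sub, mul_left_comm]

lemma mul_dotProduct_tangentRotation (α x : ι → R) (i j : ι) :
    (α * x) ⬝ᵥ tangentRotation α i j x = 0 := by
  rw [dotProduct_tangentRotation, Pi.mul_apply, Pi.mul_apply]
  ring

variable [Fintype R] [DecidableEq R]

/-- The unit zeros at which the linear phase `m` is stationary, up to multiplication by `c`, along
the tangent rotations, and annihilated by `d`. -/
noncomputable def stationaryZeros (c d : R) (α m : ι → R) : Finset (ι → R) :=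
  {a ∈ unitZeros α | (∀ k : ι × ι, c * m ⬝ᵥ tangentRotation α k.1 k.2 a = 0) ∧ d * m ⬝ᵥ a = 0}

-- Translating by a square-zero multiple of `tangentRotation`, and scaling by `1 + t * d`,
-- permute the unit zeros and shift the phase linearly in `t`.
lemma sum_unitZeros_eq_sum_stationaryZeros {ψ : AddChar R ℂ} (hψ : ψ.IsPrimitive) (α m : ι → R)
    {c d : R} (hc : c ^ 2 = 0) (hd : IsNilpotent d) :
    ∑ a ∈ unitZeros α, ψ (m ⬝ᵥ a) = ∑ a ∈ stationaryZeros c d α m, ψ (m ⬝ᵥ a) := by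
  have hsq (t : R) : (c * t) ^ 2 = 0 := by linear_combination t ^ 2 * hc
  have hu (t : R) : IsUnit (1 + t * d) :=
    ((Commute.all t d).isNilpotent_mul_left hd).isUnit_one_add
  rw [sum_addChar_eq_sum_filter_forall hψ (unitZeros α) (fun a => m ⬝ᵥ a)
      (fun (k : ι × ι) a => c * m ⬝ᵥ tangentRotation α k.1 k.2 a)
      (fun k t a => a + (c * t) • tangentRotation α k.1 k.2 a),
    sum_addChar_eq_sum_filter hψ _ (fun a => m ⬝ᵥ a) (fun a => d * m ⬝ᵥ a)
      (fun t a => (1 + t * d) • a), filter_filter, stationaryZeros]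
  · intro t a ha
    simp only [mem_filter] at ha ⊢
    refine ⟨smul_mem_unitZeros (hu t) ha.1, fun k => ?_⟩
    rw [map_smul, dotProduct_smul, smul_eq_mul, mul_left_comm, ha.2 k, mul_zero]
  · exact fun t a _ b _ hab => (hu t).smul_left_cancel.mp hab
  · intro t a _
    rw [dotProduct_smul, smul_eq_mul]
    ring
  · exact fun k t a ha =>
      add_smul_mem_unitZeros (hsq t) ha (mul_dotProduct_tangentRotation α a k.1 k.2)
  · intro k t a _ b _ (hab : a + _ = b + _)
    have hrot := congrArg (c • tangentRotation α k.1 k.2 ·) hab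
    simp only [smul_tangentRotation_add_smul _ _ _ _ _ hc] at hrot
    rwa [mul_comm c t, mul_smul, mul_smul, hrot, add_left_inj] at hab
  · intro k t a _
    rw [dotProduct_add, dotProduct_smul, smul_eq_mul]
    ring
  · intro k l t a _
    rw [← smul_eq_mul, ← dotProduct_smul, smul_tangentRotation_add_smul _ _ _ _ _ hc,
      dotProduct_smul, smul_eq_mul]

end UnitZeros

section SquareZeroExtensions

open Finset

variable {R S ι : Type*} [CommRing R] [CommRing S] {φ : R →+* S}

lemma isUnit_of_map_of_sq_zero_ker (hφ : Function.Surjective φ)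
    (hker : ∀ x y, φ x = 0 → φ y = 0 → x * y = 0) {x : R} (hx : IsUnit (φ x)) : IsUnit x := by
  obtain ⟨y, hy⟩ := hφ ↑hx.unit⁻¹
  have hxy : φ (x * y - 1) = 0 := by simp [hy]
  have hnil : IsNilpotent (x * y - 1) := ⟨2, by rw [sq, hker _ _ hxy hxy]⟩
  exact isUnit_of_mul_isUnit_left (by simpa using hnil.isUnit_add_one)

variable [Fintype R] [DecidableEq S] [Fintype ι]

lemma card_fiber_comp [DecidableEq ι] (hφ : Function.Surjective φ) (a : ι → S) :
    #{b : ι → R | φ ∘ b = a} = #{r | φ r = 0} ^ Fintype.card ι := by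
  have hfiber (s : S) : #{r | φ r = s} = #{r | φ r = 0} :=
    AddMonoidHom.card_fiber_eq_of_mem_range φ.toAddMonoidHom (hφ s) (hφ 0)
  have hpi : ({b | φ ∘ b = a} : Finset (ι → R)) =
      Fintype.piFinset fun i => {r | φ r = a i} := by
    ext b
    simp [funext_iff]
  simp [hpi, hfiber]

section Lifts

variable [DecidableEq R] [DecidableEq ι]

-- Moving a lift of `a` in the coordinate `i` changes the value of the form by an arbitrary
-- element of the kernel, so all these values are taken equally often.
lemma card_diagForm_eq_zero_lifts_mul (hφ : Function.Surjective φ)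
    (hker : ∀ x y, φ x = 0 → φ y = 0 → x * y = 0) {α : ι → R} {a : ι → S} {i : ι}
    (hi : IsUnit (2 * φ (α i) * a i)) (ha : diagForm (φ ∘ α) a = 0) :
    #{b : ι → R | φ ∘ b = a ∧ diagForm α b = 0} * #{r | φ r = 0} =
      #{b : ι → R | φ ∘ b = a} := by
  obtain ⟨w, hw⟩ := hφ ↑hi.unit⁻¹
  set v : ι → R := Pi.single i w
  have hlift {b : ι → R} (hb : φ ∘ b = a) {t : R} (ht : φ t = 0) : φ ∘ (b + t • v) = a := by
    rw [← hb]
    ext j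
    simp [ht]
  have hshift {b : ι → R} (hb : φ ∘ b = a) {t : R} (ht : φ t = 0) :
      diagForm α (b + t • v) = diagForm α b + t := by
    have hbi : φ (2 * α i * b i * w - 1) = 0 := by
      have hwi : 2 * φ (α i) * a i * φ w = 1 := by rw [hw, hi.mul_val_inv]
      rw [← congrFun hb i] at hwi
      simpa [sub_eq_zero, map_ofNat] using hwi
    rw [diagForm_add_smul, dotProduct_single, Pi.mul_apply, sq, hker t t ht ht]
    linear_combination hker t _ ht hbi
  have hvalue {b : ι → R} (hb : φ ∘ b = a) : φ (diagForm α b) = 0 := by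
    rw [map_diagForm, hb, ha]
  rw [← card_product]
  refine card_nbij' (fun x => x.1 + x.2 • v) (fun b => (b - diagForm α b • v, diagForm α b))
    ?_ ?_ ?_ ?_
  · simp only [Set.MapsTo, coe_product, Set.mem_prod, mem_coe, mem_filter, mem_univ, true_and]
    exact fun x hx => hlift hx.1.1 hx.2
  · simp only [Set.MapsTo, coe_product, Set.mem_prod, mem_coe, mem_filter, mem_univ, true_and]
    intro b hb
    have hneg : φ (-diagForm α b) = 0 := by rw [map_neg, hvalue hb, neg_zero]
    rw [sub_eq_add_neg, ← neg_smul]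
    exact ⟨⟨hlift hb hneg, by rw [hshift hb hneg, add_neg_cancel]⟩, hvalue hb⟩
  · simp only [Set.LeftInvOn, coe_product, Set.mem_prod, mem_coe, mem_filter, mem_univ, true_and]
    rintro ⟨b, t⟩ ⟨⟨hb, hb0⟩, ht⟩
    simp [hshift hb ht, hb0]
  · exact fun b _ => sub_add_cancel _ _

lemma card_diagForm_eq_zero_lifts (hφ : Function.Surjective φ)
    (hker : ∀ x y, φ x = 0 → φ y = 0 → x * y = 0) {α : ι → R} {a : ι → S} {i : ι}
    (hi : IsUnit (2 * φ (α i) * a i)) (ha : diagForm (φ ∘ α) a = 0) :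
    #{b : ι → R | φ ∘ b = a ∧ diagForm α b = 0} = #{r | φ r = 0} ^ (Fintype.card ι - 1) := by
  have hpos : 0 < #{r | φ r = 0} := card_pos.mpr ⟨0, by simp⟩
  refine Nat.eq_of_mul_eq_mul_right hpos ?_
  rw [card_diagForm_eq_zero_lifts_mul hφ hker hi ha, card_fiber_comp hφ, ← pow_succ,
    Nat.sub_add_cancel (Fintype.card_pos_iff.mpr ⟨i⟩)]

end Lifts

variable [Fintype S]

lemma sum_unitZeros_comp {M : Type*} [AddCommMonoid M] (hφ : Function.Surjective φ)
    (hker : ∀ x y, φ x = 0 → φ y = 0 → x * y = 0) {α : ι → R} {i : ι}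
    (hi : IsUnit (2 * φ (α i))) (g : (ι → S) → M) :
    ∑ b ∈ unitZeros α, g (φ ∘ b) =
      #{r | φ r = 0} ^ (Fintype.card ι - 1) • ∑ a ∈ unitZeros (φ ∘ α), g a := by
  classical
  have hmem (b : ι → R) : b ∈ unitZeros α ↔ φ ∘ b ∈ unitZeros (φ ∘ α) ∧ diagForm α b = 0 := by
    rw [mem_unitZeros, mem_unitZeros, ← map_diagForm]
    refine ⟨fun h => ⟨⟨fun j => (h.1 j).map φ, by rw [h.2, map_zero]⟩, h.2⟩, fun h => ⟨fun j =>
      isUnit_of_map_of_sq_zero_ker hφ hker (h.1.1 j), h.2⟩⟩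
  rw [smul_sum, ← sum_fiberwise_of_maps_to (g := (φ ∘ ·)) fun b hb => ((hmem b).mp hb).1]
  refine sum_congr rfl fun a ha => ?_
  have hfilter : {b ∈ unitZeros α | φ ∘ b = a} =
      ({b | φ ∘ b = a ∧ diagForm α b = 0} : Finset (ι → R)) := by
    ext b
    simp only [mem_filter, mem_univ, true_and, hmem]
    grind
  rw [mem_unitZeros] at ha
  rw [sum_congr rfl fun b hb => by rw [(mem_filter.mp hb).2], sum_const, hfilter,
    card_diagForm_eq_zero_lifts hφ hker (hi.mul (ha.1 i)) ha.2]

end SquareZeroExtensions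

section FiniteField

open Finset

variable {F : Type*} [Field F] [Fintype F] [DecidableEq F]

lemma card_filter_ne_zero : #{x : F | x ≠ 0} = Fintype.card F - 1 := by
  rw [filter_ne', card_erase_of_mem (mem_univ _), card_univ]

lemma sum_quadraticChar_affine (hF : ringChar F ≠ 2) {a : F} (ha : a ≠ 0) (b : F) :
    ∑ x : F, quadraticChar F (a * x + b) = 0 := by
  rw [← quadraticChar_sum_zero hF]
  exact ((Equiv.mulLeft₀ a ha).trans (Equiv.addRight b)).sum_comp fun x => quadraticChar F x

lemma card_mul_sq_eq (hF : ringChar F ≠ 2) {a : F} (ha : a ≠ 0) (y : F) :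
    (#{x : F | a * x ^ 2 = y} : ℤ) = quadraticChar F (a * y) + 1 := by
  have hsqrt : #{x : F | a * x ^ 2 = y} = #({x : F | x ^ 2 = y / a} : Set F).toFinset := by
    congr 1
    ext x
    simp [eq_div_iff ha, mul_comm]
  have hay : a * y = a ^ 2 * (y / a) := by field_simp
  rw [hsqrt, quadraticChar_card_sqrts hF, hay, map_mul, quadraticChar_sq_one' ha, one_mul]

lemma card_ne_zero_and_mul_sq_eq (hF : ringChar F ≠ 2) {a : F} (ha : a ≠ 0) (y : F) :
    (#{x : F | x ≠ 0 ∧ a * x ^ 2 = y} : ℤ) =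
      quadraticChar F (a * y) + 1 - if y = 0 then 1 else 0 := by
  split_ifs with hy
  · simp [hy, ha]
  · rw [sub_zero, ← card_mul_sq_eq hF ha]
    congr 2
    ext x
    simp only [mem_filter, mem_univ, true_and, and_iff_right_iff_imp]
    rintro rfl rfl
    simp at hy

lemma sum_quadraticChar_mul_sq_add (hF : ringChar F ≠ 2) {a b : F} (ha : a ≠ 0) (hb : b ≠ 0) :
    ∑ x : F, quadraticChar F (a * x ^ 2 + b) = -quadraticChar F a := by
  have hfiber : ∑ x : F, quadraticChar F (a * x ^ 2 + b) =
      ∑ y : F, (quadraticChar F y + 1) * quadraticChar F (a * y + b) := by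
    rw [← sum_fiberwise (s := univ) (g := fun x : F => x ^ 2)]
    refine sum_congr rfl fun y _ => ?_
    have hcard := card_mul_sq_eq hF one_ne_zero y
    simp only [one_mul] at hcard
    rw [sum_congr rfl fun x hx => by rw [(mem_filter.mp hx).2], sum_const, ← hcard, nsmul_eq_mul]
  have hinv (y : F) : (quadraticChar F y + 1) * quadraticChar F (a * y + b) =
      quadraticChar F (a * y + b) + (quadraticChar F (b * y⁻¹ + a) -
        if y = 0 then quadraticChar F a else 0) := by
    split_ifs with hy
    · simp [hy]
    · have hy2 : quadraticChar F y ^ 2 = 1 := quadraticChar_sq_one hy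
      have : a * y + b = y * (b * y⁻¹ + a) := by field_simp; ring
      rw [this, map_mul]
      linear_combination quadraticChar F (b * y⁻¹ + a) * hy2
  have hswap : ∑ y : F, quadraticChar F (b * y⁻¹ + a) = ∑ y : F, quadraticChar F (b * y + a) :=
    Equiv.sum_comp (Equiv.inv F) fun y => quadraticChar F (b * y + a)
  rw [hfiber, sum_congr rfl fun y _ => hinv y, sum_add_distrib, sum_sub_distrib, hswap,
    sum_quadraticChar_affine hF ha, sum_quadraticChar_affine hF hb]
  simp

lemma card_affine_conic (hF : ringChar F ≠ 2) {α : Fin 3 → F} (hα : ∀ i, α i ≠ 0) :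
    (#{u : F × F | u.1 ≠ 0 ∧ u.2 ≠ 0 ∧ α 0 * u.1 ^ 2 + α 1 * u.2 ^ 2 + α 2 = 0} : ℤ) =
      Fintype.card F - (2 + quadraticChar F (-(α 0 * α 1)) + quadraticChar F (-(α 0 * α 2)) +
        quadraticChar F (-(α 1 * α 2))) := by
  have hfiber :
      (#{u : F × F | u.1 ≠ 0 ∧ u.2 ≠ 0 ∧ α 0 * u.1 ^ 2 + α 1 * u.2 ^ 2 + α 2 = 0} : ℤ) =
      ∑ x : F with x ≠ 0, (#{y : F | y ≠ 0 ∧ α 1 * y ^ 2 = -(α 0 * x ^ 2 + α 2)} : ℤ) := by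
    simp only [natCast_card_filter, Fintype.sum_prod_type, sum_filter]
    refine sum_congr rfl fun x _ => ?_
    by_cases hx : x = 0
    · simp [hx]
    · simp only [hx, ne_eq, not_false_eq_true, true_and, if_true]
      refine sum_congr rfl fun y _ => if_congr (and_congr_right fun _ => ?_) rfl rfl
      constructor <;> intro h <;> linear_combination h
  have hterm (x : F) : (#{y : F | y ≠ 0 ∧ α 1 * y ^ 2 = -(α 0 * x ^ 2 + α 2)} : ℤ) =
      quadraticChar F (-(α 0 * α 1) * x ^ 2 + -(α 1 * α 2)) + 1 -
        if α 0 * x ^ 2 = -α 2 then 1 else 0 := by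
    have harg : α 1 * -(α 0 * x ^ 2 + α 2) = -(α 0 * α 1) * x ^ 2 + -(α 1 * α 2) := by ring
    simp only [card_ne_zero_and_mul_sq_eq hF (hα 1), harg, neg_eq_zero, add_eq_zero_iff_eq_neg]
  have hzeros : ∑ x : F with x ≠ 0, (if α 0 * x ^ 2 = -α 2 then (1 : ℤ) else 0) =
      quadraticChar F (-(α 0 * α 2)) + 1 := by
    rw [sum_boole, filter_filter, card_ne_zero_and_mul_sq_eq hF (hα 0),
      if_neg (neg_ne_zero.mpr (hα 2)), sub_zero, mul_neg]
  have hchar : ∑ x : F with x ≠ 0, quadraticChar F (-(α 0 * α 1) * x ^ 2 + -(α 1 * α 2)) =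
      -quadraticChar F (-(α 0 * α 1)) - quadraticChar F (-(α 1 * α 2)) := by
    rw [filter_ne', sum_erase_eq_sub (mem_univ _), sum_quadraticChar_mul_sq_add hF]
    · simp
    · exact neg_ne_zero.mpr (mul_ne_zero (hα 0) (hα 1))
    · exact neg_ne_zero.mpr (mul_ne_zero (hα 1) (hα 2))
  rw [hfiber, sum_congr rfl fun x _ => hterm x, sum_sub_distrib, sum_add_distrib, hzeros, hchar,
    sum_const, card_filter_ne_zero, nsmul_eq_mul, mul_one,
    Nat.cast_sub Fintype.card_pos, Nat.cast_one]
  ring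

lemma card_unitZeros_eq_card_affine_conic_mul (α : Fin 3 → F) :
    #(unitZeros α) =
      #{u : F × F | u.1 ≠ 0 ∧ u.2 ≠ 0 ∧ α 0 * u.1 ^ 2 + α 1 * u.2 ^ 2 + α 2 = 0} *
        (Fintype.card F - 1) := by
  rw [← card_filter_ne_zero, ← card_product]
  refine card_nbij' (fun a => ((a 0 / a 2, a 1 / a 2), a 2))
    (fun b => ![b.1.1 * b.2, b.1.2 * b.2, b.2]) ?_ ?_ ?_ ?_
  · intro a ha
    simp only [mem_coe, mem_unitZeros, isUnit_iff_ne_zero, diagForm, Fin.sum_univ_three] at ha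
    obtain ⟨ha0, ha⟩ := ha
    have ha2 := ha0 2
    simp only [mem_coe, mem_product, mem_filter, mem_univ, true_and]
    refine ⟨⟨div_ne_zero (ha0 0) (ha0 2), div_ne_zero (ha0 1) (ha0 2), ?_⟩, ha0 2⟩
    field_simp
    linear_combination ha
  · intro b hb
    simp only [mem_coe, mem_product, mem_filter, mem_univ, true_and] at hb
    obtain ⟨⟨hb0, hb1, hb⟩, hb2⟩ := hb
    simp only [mem_coe, mem_unitZeros, isUnit_iff_ne_zero, diagForm, Fin.sum_univ_three,
      Fin.forall_fin_succ]
    refine ⟨by simp [hb0, hb1, hb2], ?_⟩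
    simp only [Matrix.cons_val_zero, Matrix.cons_val_one, Matrix.cons_val]
    linear_combination b.2 ^ 2 * hb
  · intro a ha
    simp only [mem_coe, mem_unitZeros, isUnit_iff_ne_zero] at ha
    ext i
    fin_cases i <;> simp [ha.1 2]
  · intro b hb
    simp only [mem_coe, mem_product, mem_filter, mem_univ, true_and] at hb
    simp [hb.2]

lemma card_unitZeros_field (hF : ringChar F ≠ 2) {α : Fin 3 → F} (hα : ∀ i, α i ≠ 0) :
    (#(unitZeros α) : ℤ) = (Fintype.card F - (2 + quadraticChar F (-(α 0 * α 1)) +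
      quadraticChar F (-(α 0 * α 2)) + quadraticChar F (-(α 1 * α 2)))) *
        (Fintype.card F - 1) := by
  rw [card_unitZeros_eq_card_affine_conic_mul, Nat.cast_mul, card_affine_conic hF hα,
    Nat.cast_sub Fintype.card_pos, Nat.cast_one]

end FiniteField

section Poisson

lemma summable_norm_prod {𝕜 κ : Type*} [NormedField 𝕜] {d : ℕ} {u : Fin d → κ → 𝕜}
    (hu : ∀ i, Summable fun k => ‖u i k‖) :
    Summable fun m : Fin d → κ => ‖∏ i, u i (m i)‖ := by
  induction d with
  | zero => exact (hasSum_fintype _).summable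
  | succ d ih =>
    rw [← (Fin.consEquiv fun _ : Fin (d + 1) => κ).summable_iff]
    simpa [Function.comp_def, Fin.prod_univ_succ, norm_mul] using
      (hu 0).mul_norm (ih fun i => hu i.succ)

lemma tsum_prod_eq_prod_tsum {𝕜 κ : Type*} [NormedField 𝕜] [CompleteSpace 𝕜] {d : ℕ}
    {u : Fin d → κ → 𝕜} (hu : ∀ i, Summable fun k => ‖u i k‖) :
    ∑' m : Fin d → κ, ∏ i, u i (m i) = ∏ i, ∑' k, u i k := by
  induction d with
  | zero => simp
  | succ d ih =>
    rw [← (Fin.consEquiv fun _ : Fin (d + 1) => κ).tsum_eq, Fin.prod_univ_succ,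
      ← ih fun i => hu i.succ,
      tsum_mul_tsum_of_summable_norm (hu 0) (summable_norm_prod fun i => hu i.succ)]
    simp [Fin.prod_univ_succ]

lemma fourier_comp_mul {E : Type*} [NormedAddCommGroup E] [NormedSpace ℂ E] (f : ℝ → E) {c : ℝ}
    (hc : c ≠ 0) (ξ : ℝ) : 𝓕 (fun y => f (c * y)) ξ = |c⁻¹| • 𝓕 f (c⁻¹ * ξ) := by
  rw [Real.fourier_real_eq_integral_exp_smul, Real.fourier_real_eq_integral_exp_smul,
    ← Measure.integral_comp_mul_left]
  refine integral_congr_ae (ae_of_all _ fun y => ?_)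
  have hphase : -2 * Real.pi * (c * y) * (c⁻¹ * ξ) = -2 * Real.pi * y * ξ := by field_simp
  simp only [hphase]

lemma tsum_ite_intCast_eq {E : Type*} [AddCommMonoid E] [TopologicalSpace E] [T2Space E] {q : ℕ}
    [NeZero q] (a : ZMod q) (F : ℤ → E) :
    ∑' x : ℤ, (if (x : ZMod q) = a then F x else 0) = ∑' k : ℤ, F (a.val + q * k) := by
  have hinj : Function.Injective fun k : ℤ => (a.val : ℤ) + q * k := fun k l h => by
    simpa [NeZero.ne q] using h
  rw [← hinj.tsum_eq]
  · simp
  · intro x hx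
    have hxa : (x : ZMod q) = (a.val : ℤ) := by
      by_contra h
      simp_all
    obtain ⟨k, hk⟩ := (ZMod.intCast_eq_intCast_iff_dvd_sub _ _ _).mp hxa.symm
    exact ⟨k, by dsimp only; linear_combination -hk⟩

variable (f : 𝓢(ℝ, ℂ))

lemma exists_abs_pow_mul_norm_le (k : ℕ) : ∃ C : ℝ, 0 < C ∧ ∀ x : ℝ, |x| ^ k * ‖f x‖ ≤ C := by
  obtain ⟨C, hC, h⟩ := f.decay k 0
  exact ⟨C, hC, fun x => by simpa using h x⟩

lemma summable_norm_schwartz_mul_int {c : ℝ} (hc : c ≠ 0) : Summable fun k : ℤ => ‖f (c * k)‖ := by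
  obtain ⟨C, -, hC⟩ := exists_abs_pow_mul_norm_le f 2
  have hsum : Summable fun k : ℤ => C / c ^ 2 * (1 / (k : ℝ) ^ 2) :=
    (Real.summable_one_div_int_pow.mpr one_lt_two).mul_left _
  refine hsum.of_norm_bounded_eventually ?_
  filter_upwards [(Set.finite_singleton (0 : ℤ)).compl_mem_cofinite] with k hk
  have hk' : (k : ℝ) ≠ 0 := by exact_mod_cast hk
  rw [norm_norm, div_mul_div_comm, mul_one, ← mul_pow, le_div_iff₀ (by positivity), mul_comm]
  simpa only [sq_abs] using hC (c * k)

lemma tsum_residue_eq_tsum_fourier {q : ℕ} [NeZero q] {N : ℝ} (hN : 0 < N) (a : ZMod q) :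
    ∑' x : ℤ, (if (x : ZMod q) = a then f (x / N) else 0) =
      (N / q : ℝ) * ∑' k : ℤ, 𝓕 f (N / q * k) * ZMod.stdAddChar ((k : ZMod q) * a) := by
  have hq : (0 : ℝ) < q := by exact_mod_cast Nat.pos_of_neZero q
  have hqN : 0 < q / N := div_pos hq hN
  let g : 𝓢(ℝ, ℂ) := SchwartzMap.compCLMOfContinuousLinearEquiv ℂ
    (ContinuousLinearEquiv.smulLeft (Units.mk0 (q / N) hqN.ne')) f
  have hg (y : ℝ) : g y = f (q / N * y) := rfl
  have hleft (k : ℤ) : f ((a.val + q * k : ℤ) / N) = g (a.val / q + k) := by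
    rw [hg]
    congr 1
    push_cast
    field_simp
  have hchar (k : ℤ) : ZMod.stdAddChar ((k : ZMod q) * a) =
      fourier k ((a.val / q : ℝ) : UnitAddCircle) := by
    have hval : ((a.val : ℤ) : ZMod q) = a := by simp
    rw [← hval, ← Int.cast_mul, ZMod.stdAddChar_coe, fourier_coe_apply, hval]
    congr 1
    push_cast
    ring
  have hright (k : ℤ) : 𝓕 g k * fourier k ((a.val / q : ℝ) : UnitAddCircle) =
      (N / q : ℝ) * (𝓕 f (N / q * k) * ZMod.stdAddChar ((k : ZMod q) * a)) := by
    have hfourier : 𝓕 g k = (N / q : ℝ) * 𝓕 f (N / q * k) := by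
      rw [SchwartzMap.fourier_coe, SchwartzMap.fourier_coe, show ⇑g = fun y => f (q / N * y) from
        rfl, fourier_comp_mul _ hqN.ne', inv_div, abs_of_pos (div_pos hN hq), Complex.real_smul]
    rw [hchar, hfourier, mul_assoc]
  rw [tsum_ite_intCast_eq a fun x : ℤ => f (x / N), tsum_congr hleft,
    g.tsum_eq_tsum_fourier (a.val / q), tsum_congr hright, tsum_mul_left]

lemma stdAddChar_dotProduct {ι : Type*} [Fintype ι] {q : ℕ} [NeZero q] (x y : ι → ZMod q) :
    ZMod.stdAddChar (x ⬝ᵥ y) = ∏ i, ZMod.stdAddChar (x i * y i) :=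
  map_prod (ZMod.stdAddChar (N := q)).toMonoidHom
    (fun i => Multiplicative.ofAdd (x i * y i)) Finset.univ

-- Poisson summation in every residue class `a ∈ Z`.
lemma tsum_ite_mem_eq_tsum_fourier {d q : ℕ} [NeZero q] {N : ℝ} (hN : 0 < N)
    (Z : Finset (Fin d → ZMod q)) :
    ∑' x : Fin d → ℤ, (if (fun i => (x i : ZMod q)) ∈ Z then ∏ i, f (x i / N) else 0) =
      (N / q : ℂ) ^ d * ∑' m : Fin d → ℤ, (∏ i, 𝓕 f (N / q * m i)) *
        ∑ a ∈ Z, ZMod.stdAddChar ((fun i => (m i : ZMod q)) ⬝ᵥ a) := by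
  have hq : (0 : ℝ) < q := by exact_mod_cast Nat.pos_of_neZero q
  have hsumL (a : Fin d → ZMod q) (i : Fin d) :
      Summable fun x : ℤ => ‖if (x : ZMod q) = a i then f (x / N) else 0‖ := by
    have h := summable_norm_schwartz_mul_int f (inv_ne_zero hN.ne')
    refine h.of_nonneg_of_le (fun _ => norm_nonneg _) fun x => ?_
    split_ifs
    · rw [div_eq_inv_mul]
    · simp
  have hsumR (a : Fin d → ZMod q) (i : Fin d) :
      Summable fun k : ℤ => ‖𝓕 f (N / q * k) * ZMod.stdAddChar ((k : ZMod q) * a i)‖ := by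
    simpa [AddChar.norm_apply] using
      summable_norm_schwartz_mul_int (𝓕 f) (div_pos hN hq).ne'
  have hleft (x : Fin d → ℤ) :
      (if (fun i => (x i : ZMod q)) ∈ Z then ∏ i, f (x i / N) else 0) =
        ∑ a ∈ Z, ∏ i, if (x i : ZMod q) = a i then f (x i / N) else 0 := by
    have hvec (a : Fin d → ZMod q) : (∀ i, (x i : ZMod q) = a i) ↔ (fun i => (x i : ZMod q)) = a :=
      funext_iff.symm
    simp only [Finset.prod_ite_zero, Finset.mem_univ, true_imp_iff, hvec, Finset.sum_ite_eq]
  have hright (m : Fin d → ℤ) : (∏ i, 𝓕 f (N / q * m i)) *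
        ∑ a ∈ Z, ZMod.stdAddChar ((fun i => (m i : ZMod q)) ⬝ᵥ a) =
      ∑ a ∈ Z, ∏ i, 𝓕 f (N / q * m i) * ZMod.stdAddChar ((m i : ZMod q) * a i) := by
    simp only [Finset.mul_sum, stdAddChar_dotProduct, Finset.prod_mul_distrib]
  rw [tsum_congr hleft, tsum_congr hright,
    Summable.tsum_finsetSum fun a _ => (summable_norm_prod (hsumL a)).of_norm,
    Summable.tsum_finsetSum fun a _ => (summable_norm_prod (hsumR a)).of_norm, Finset.mul_sum]
  refine Finset.sum_congr rfl fun a _ => ?_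
  rw [tsum_prod_eq_prod_tsum (hsumL a), tsum_prod_eq_prod_tsum (hsumR a),
    Finset.prod_congr rfl fun i _ => tsum_residue_eq_tsum_fourier f hN (a i),
    Finset.prod_mul_distrib, Finset.prod_const, Finset.card_univ, Fintype.card_fin]
  push_cast
  rfl

end Poisson

section LocalRings

open Finset

variable {R : Type*} [CommRing R] [IsLocalRing R]

lemma eq_or_eq_neg_of_sq_eq_sq_of_isUnit (h2 : IsUnit (2 : R)) {x y : R} (hx : IsUnit x)
    (h : x ^ 2 = y ^ 2) : x = y ∨ x = -y := by
  have hmul : (x - y) * (x + y) = 0 := by linear_combination h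
  have hsum : IsUnit ((x - y) + (x + y)) := by
    rw [sub_add_add_cancel, ← two_mul]
    exact h2.mul hx
  rcases IsLocalRing.isUnit_or_isUnit_of_isUnit_add hsum with hu | hu
  · exact Or.inr (eq_neg_of_add_eq_zero_left (hu.mul_right_eq_zero.mp hmul))
  · exact Or.inl (sub_eq_zero.mp (hu.mul_left_eq_zero.mp hmul))

lemma card_le_two_of_mul_sq_eq (h2 : IsUnit (2 : R)) {γ c : R} (hγ : IsUnit γ) {s : Finset R}
    (hs : ∀ z ∈ s, IsUnit z ∧ γ * z ^ 2 = c) : #s ≤ 2 := by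
  classical
  rcases s.eq_empty_or_nonempty with rfl | ⟨z, hz⟩
  · simp
  · refine (card_le_card fun w hw => ?_).trans (card_le_two (a := z) (b := -z))
    have hsq : w ^ 2 = z ^ 2 := hγ.mul_left_cancel ((hs w hw).2.trans (hs z hz).2.symm)
    simpa using eq_or_eq_neg_of_sq_eq_sq_of_isUnit h2 (hs w hw).1 hsq

lemma isUnit_of_not_isUnit_dotProduct_tangentRotation {ι : Type*} [Fintype ι] [DecidableEq ι]
    {α m b : ι → R} {i j : ι} (hα : IsUnit (α j)) (hb : IsUnit (b j)) (hi : IsUnit (m i))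
    (hrot : ¬ IsUnit (m ⬝ᵥ tangentRotation α i j b)) : IsUnit (m j) := by
  rw [dotProduct_tangentRotation] at hrot
  have hsum : IsUnit (m i * (α j * b j) - m j * (α i * b i) + m j * (α i * b i)) := by
    rw [sub_add_cancel]
    exact hi.mul (hα.mul hb)
  exact isUnit_of_mul_isUnit_left
    ((IsLocalRing.isUnit_or_isUnit_of_isUnit_add hsum).resolve_left hrot)

-- The last coordinate of a unit zero is determined up to sign by the others.
lemma card_le_two_mul_card_image_of_subset_unitZeros [Fintype R] [DecidableEq R]
    (h2 : IsUnit (2 : R)) {α : Fin 3 → R} (hα : IsUnit (α 2)) {s : Finset (Fin 3 → R)}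
    (hs : s ⊆ unitZeros α) : #s ≤ 2 * #(s.image fun a => (a 0, a 1)) := by
  refine card_le_mul_card_image s 2 fun x _ => ?_
  have hinj : Set.InjOn (fun a : Fin 3 → R => a 2) {a ∈ s | (a 0, a 1) = x} := by
    intro a ha b hb hab
    simp only [Set.mem_ofPred_eq] at ha hb
    have hx := ha.2.trans hb.2.symm
    simp only [Prod.mk.injEq] at hx
    ext i
    fin_cases i
    exacts [hx.1, hx.2, hab]
  rw [← card_image_of_injOn (s := {a ∈ s | (a 0, a 1) = x}) (by simpa using hinj)]
  refine card_le_two_of_mul_sq_eq h2 hα (c := -(α 0 * x.1 ^ 2 + α 1 * x.2 ^ 2)) ?_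
  simp only [mem_image, mem_filter, forall_exists_index, and_imp]
  rintro _ a ha rfl rfl
  have hzero := mem_unitZeros.mp (hs ha)
  refine ⟨hzero.1 2, ?_⟩
  rw [diagForm, Fin.sum_univ_three] at hzero
  linear_combination hzero.2

end LocalRings

section DualForm

variable {R : Type*} [CommRing R]

/-- The coefficients of the dual (adjugate) form of the ternary diagonal form with
coefficients `α`; its zeros are the normal vectors of the cone `diagForm α = 0`. -/
def dualCoeff (α : Fin 3 → R) : Fin 3 → R := ![α 1 * α 2, α 0 * α 2, α 0 * α 1]

lemma mul_diagForm_dualCoeff_eq_zero {α m b : Fin 3 → R} {d : R} (hα : IsUnit (α 0))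
    (hb : IsUnit (b 0)) (hzero : diagForm α b = 0) (hm : d * m ⬝ᵥ b = 0)
    (hrot : ∀ j, d * (m ⬝ᵥ tangentRotation α 0 j b) ^ 2 = 0) :
    d * diagForm (dualCoeff α) m = 0 := by
  have h1 := hrot 1
  have h2 := hrot 2
  rw [dotProduct_tangentRotation] at h1 h2
  refine (hα.mul (hb.pow 2)).mul_right_eq_zero.mp ?_
  simp only [diagForm, dotProduct, dualCoeff, Fin.sum_univ_three, Matrix.cons_val_zero,
    Matrix.cons_val_one, Matrix.cons_val] at hzero hm ⊢
  linear_combination -(d * α 1 * α 2 * m 0 ^ 2) * hzero + 2 * m 0 * α 0 * α 1 * α 2 * b 0 * hm +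
    α 2 * h1 + α 1 * h2

end DualForm

section PrimePowers

open Finset

lemma natCast_pow_self (p n : ℕ) : (p : ZMod (p ^ n)) ^ n = 0 := by
  rw [← Nat.cast_pow, ZMod.natCast_self]

lemma card_natCast_mul_eq_zero_le {q k : ℕ} [NeZero q] (hk : 0 < k) :
    #{x : ZMod q | k * x = 0} ≤ k := by
  simpa only [nsmul_eq_mul] using IsAddCyclic.card_nsmul_eq_zero_le (α := ZMod q) hk

variable {p : ℕ} [hp : Fact p.Prime] {n : ℕ}

lemma isUnit_intCast_zmod_prime_pow_iff (hn : n ≠ 0) {k : ℤ} :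
    IsUnit (k : ZMod (p ^ n)) ↔ ¬ (p : ℤ) ∣ k := by
  rw [ZMod.coe_int_isUnit_iff_isCoprime, Nat.cast_pow, IsCoprime.pow_left_iff (by omega),
    Prime.coprime_iff_not_dvd (Nat.prime_iff_prime_int.mp hp.out)]

lemma isUnit_two_zmod_prime_pow (hp2 : 2 < p) : IsUnit (2 : ZMod (p ^ n)) := by
  have hcop : Nat.Coprime 2 (p ^ n) :=
    ((Nat.coprime_primes Nat.prime_two hp.out).mpr hp2.ne).pow_right n
  exact_mod_cast (ZMod.isUnit_iff_coprime 2 (p ^ n)).mpr hcop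

lemma isLocalRing_zmod_prime_pow (hn : n ≠ 0) : IsLocalRing (ZMod (p ^ n)) := by
  have : Fact (1 < p ^ n) := ⟨Nat.one_lt_pow hn hp.out.one_lt⟩
  refine .of_nonunits_add fun x y hx hy => ?_
  obtain ⟨k, rfl⟩ := ZMod.intCast_surjective x
  obtain ⟨l, rfl⟩ := ZMod.intCast_surjective y
  rw [← Int.cast_add]
  simp only [mem_nonunits_iff, isUnit_intCast_zmod_prime_pow_iff hn, not_not] at hx hy ⊢
  exact dvd_add hx hy

lemma prime_pow_mul_intCast_eq_zero_iff {i : ℕ} (hi : i ≤ n) (k : ℤ) :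
    (p : ZMod (p ^ n)) ^ i * k = 0 ↔ (p : ℤ) ^ (n - i) ∣ k := by
  have hp0 : (p : ℤ) ^ i ≠ 0 := pow_ne_zero i (Nat.cast_ne_zero.mpr hp.out.ne_zero)
  have hcast : (p : ZMod (p ^ n)) ^ i * k = ((p ^ i * k : ℤ) : ZMod (p ^ n)) := by push_cast; rfl
  rw [hcast, ZMod.intCast_zmod_eq_zero_iff_dvd, Nat.cast_pow, ← Nat.add_sub_cancel' hi, pow_add,
    mul_dvd_mul_iff_left hp0, Nat.add_sub_cancel_left]

lemma prime_mul_sq_eq_zero {i : ℕ} (hin : i ≤ n) (hi : 2 * i ≤ n + 1) {x : ZMod (p ^ n)}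
    (hx : (p : ZMod (p ^ n)) ^ i * x = 0) : (p : ZMod (p ^ n)) * x ^ 2 = 0 := by
  obtain ⟨k, rfl⟩ := ZMod.intCast_surjective x
  obtain ⟨l, rfl⟩ := (prime_pow_mul_intCast_eq_zero_iff hin k).mp hx
  have hp : (p : ZMod (p ^ n)) ^ (2 * (n - i) + 1) = 0 :=
    pow_eq_zero_of_le (by omega) (natCast_pow_self p n)
  push_cast
  linear_combination (l : ZMod (p ^ n)) ^ 2 * hp

end PrimePowers

section UnitZeroSums

open Finset

variable {ι : Type*} [Fintype ι]

/-- The exponential sum, at the frequency `m`, over the zeros modulo `q` of the integral diagonal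
form with coefficients `α` whose coordinates are units. -/
noncomputable def unitZeroSum (q : ℕ) [NeZero q] (α m : ι → ℤ) : ℂ :=
  ∑ a ∈ unitZeros fun i => (α i : ZMod q), ZMod.stdAddChar ((fun i => (m i : ZMod q)) ⬝ᵥ a)

lemma unitZeroSum_zero (q : ℕ) [NeZero q] (α : ι → ℤ) :
    unitZeroSum q α 0 = #(unitZeros fun i => (α i : ZMod q)) := by
  have h0 : (fun _ => 0 : ι → ZMod q) = 0 := rfl
  simp [unitZeroSum, h0]

variable {p : ℕ} [hp : Fact p.Prime] {n : ℕ}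

section Stationary

variable [DecidableEq ι]

lemma unitZeroSum_eq_sum_stationaryZeros {i : ℕ} (hi : n ≤ 2 * i) (α m : ι → ℤ) :
    unitZeroSum (p ^ n) α m = ∑ a ∈ stationaryZeros ((p : ZMod (p ^ n)) ^ i) p
      (fun j => (α j : ZMod (p ^ n))) (fun j => (m j : ZMod (p ^ n))),
      ZMod.stdAddChar ((fun j => (m j : ZMod (p ^ n))) ⬝ᵥ a) :=
  sum_unitZeros_eq_sum_stationaryZeros (ZMod.isPrimitive_stdAddChar _) _ _
    (by rw [← pow_mul', pow_eq_zero_of_le hi (natCast_pow_self p n)])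
    ⟨n, natCast_pow_self p n⟩

-- A stationary point makes all the rotated phases non-units, so the frequency has all of its
-- coordinates divisible by `p` or none.
lemma not_dvd_of_mem_stationaryZeros {i : ℕ} (hi : i < n) {α m : ι → ℤ}
    (hα : ∀ j, ¬ (p : ℤ) ∣ α j) {d : ZMod (p ^ n)} {a : ι → ZMod (p ^ n)}
    (ha : a ∈ stationaryZeros ((p : ZMod (p ^ n)) ^ i) d (fun j => (α j : ZMod (p ^ n)))
      fun j => (m j : ZMod (p ^ n)))
    {j : ι} (hj : ¬ (p : ℤ) ∣ m j) (k : ι) : ¬ (p : ℤ) ∣ m k := by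
  have hn : n ≠ 0 := by omega
  have := isLocalRing_zmod_prime_pow (p := p) hn
  rw [stationaryZeros, mem_filter, mem_unitZeros] at ha
  rw [← isUnit_intCast_zmod_prime_pow_iff hn] at hj ⊢
  refine isUnit_of_not_isUnit_dotProduct_tangentRotation (α := fun j => (α j : ZMod (p ^ n)))
    (m := fun j => (m j : ZMod (p ^ n))) ((isUnit_intCast_zmod_prime_pow_iff hn).mpr (hα k))
    (ha.1.1 k) hj fun hunit => ?_
  have hpi : (p : ZMod (p ^ n)) ^ i * (1 : ℤ) = 0 := by
    rw [Int.cast_one, mul_one]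
    exact hunit.mul_left_eq_zero.mp (ha.2.1 (j, k))
  rw [prime_pow_mul_intCast_eq_zero_iff hi.le] at hpi
  exact (Nat.prime_iff_prime_int.mp hp.out).not_dvd_one
    ((dvd_pow_self _ (by omega)).trans hpi)

lemma dvd_diagForm_dualCoeff_of_mem_stationaryZeros {i : ℕ} (hi : 2 * i ≤ n + 1) (hn : n ≠ 0)
    {α m : Fin 3 → ℤ} (hα : ¬ (p : ℤ) ∣ α 0) {a : Fin 3 → ZMod (p ^ n)}
    (ha : a ∈ stationaryZeros ((p : ZMod (p ^ n)) ^ i) p (fun j => (α j : ZMod (p ^ n)))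
      fun j => (m j : ZMod (p ^ n))) :
    (p : ℤ) ^ (n - 1) ∣ diagForm (dualCoeff α) m := by
  rw [stationaryZeros, mem_filter, mem_unitZeros] at ha
  obtain ⟨⟨hunit, hzero⟩, hrot, hm⟩ := ha
  have hdual := mul_diagForm_dualCoeff_eq_zero ((isUnit_intCast_zmod_prime_pow_iff hn).mpr hα)
    (hunit 0) hzero hm fun j => prime_mul_sq_eq_zero (by omega) hi (hrot (0, j))
  rw [← prime_pow_mul_intCast_eq_zero_iff (by omega), pow_one]
  simpa [diagForm, dualCoeff, Fin.sum_univ_three] using hdual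

lemma card_stationaryZeros_le {i : ℕ} (hn : n ≠ 0) (hp2 : 2 < p) {α m : Fin 3 → ℤ}
    (hα : ∀ j, ¬ (p : ℤ) ∣ α j) (hm : ¬ (p : ℤ) ∣ m 0) (d : ZMod (p ^ n)) :
    #(stationaryZeros ((p : ZMod (p ^ n)) ^ i) d (fun j => (α j : ZMod (p ^ n)))
      fun j => (m j : ZMod (p ^ n))) ≤ 2 * p ^ (n + i) := by
  have := isLocalRing_zmod_prime_pow (p := p) hn
  have hu {k : ℤ} : ¬ (p : ℤ) ∣ k → IsUnit (k : ZMod (p ^ n)) :=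
    (isUnit_intCast_zmod_prime_pow_iff hn).mpr
  set s := stationaryZeros ((p : ZMod (p ^ n)) ^ i) d (fun j => (α j : ZMod (p ^ n)))
    fun j => (m j : ZMod (p ^ n)) with hs
  refine (card_le_two_mul_card_image_of_subset_unitZeros (isUnit_two_zmod_prime_pow hp2)
    (hu (hα 2)) (filter_subset _ _ : s ⊆ _)).trans (Nat.mul_le_mul_left 2 ?_)
  let f (x : ZMod (p ^ n) × ZMod (p ^ n)) := (x.1, (m 0 * (α 1 * x.2) - m 1 * (α 0 * x.1)))
  have hf : Function.Injective f := by
    rintro ⟨x, y⟩ ⟨x', y'⟩ h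
    simp only [f, Prod.mk.injEq] at h
    obtain ⟨rfl, h⟩ := h
    rw [sub_left_inj] at h
    rw [(hu (hα 1)).mul_left_cancel ((hu hm).mul_left_cancel h)]
  calc #(s.image fun a => (a 0, a 1))
      ≤ #((univ : Finset (ZMod (p ^ n))) ×ˢ
          ({x | ((p ^ i : ℕ) : ZMod (p ^ n)) * x = 0} : Finset (ZMod (p ^ n)))) := by
        refine card_le_card_of_injOn f ?_ hf.injOn
        simp only [hs, stationaryZeros, dotProduct_tangentRotation]
        rintro _ hx
        obtain ⟨a, ha, rfl⟩ := mem_image.mp (mem_coe.mp hx)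
        simpa [f] using (mem_filter.mp ha).2.1 (0, 1)
    _ ≤ p ^ n * p ^ i := by
        rw [card_product, card_univ, ZMod.card]
        exact Nat.mul_le_mul_left _ (card_natCast_mul_eq_zero_le (pow_pos hp.out.pos i))
    _ = p ^ (n + i) := (pow_add p n i).symm

end Stationary

end UnitZeroSums

section Scaling

open Finset

section Modulus

variable {ι : Type*} [Fintype ι] {k q r : ℕ} [NeZero q] [NeZero r]

lemma stdAddChar_natCast_mul (h : q = k * r) (x : ZMod q) :
    ZMod.stdAddChar ((k : ZMod q) * x) =
      ZMod.stdAddChar (ZMod.castHom (h ▸ dvd_mul_left r k) (ZMod r) x) := by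
  obtain ⟨l, rfl⟩ := ZMod.intCast_surjective x
  have hq : (q : ℂ) ≠ 0 := NeZero.ne _
  have hcast : (k : ZMod q) * l = ((k * l : ℤ) : ZMod q) := by push_cast; rfl
  rw [hcast, map_intCast (ZMod.castHom _ (ZMod r)), ZMod.stdAddChar_coe, ZMod.stdAddChar_coe]
  congr 1
  subst h
  push_cast at hq ⊢
  field_simp [left_ne_zero_of_mul hq]

lemma card_ker_castHom (h : q = k * r) :
    #{x : ZMod q | ZMod.castHom (h ▸ dvd_mul_left r k) (ZMod r) x = 0} = k := by
  set φ := ZMod.castHom (h ▸ dvd_mul_left r k : r ∣ q) (ZMod r)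
  have hφ : Function.Surjective φ := ZMod.castHom_surjective _
  have htotal := card_eq_sum_card_fiberwise (f := φ) (s := univ) (t := univ) (by simp)
  have hfiber (y : ZMod r) : #{x | φ x = y} = #{x | φ x = 0} :=
    AddMonoidHom.card_fiber_eq_of_mem_range φ (hφ y) (hφ 0)
  simp only [hfiber, sum_const, card_univ, ZMod.card, smul_eq_mul] at htotal
  refine Nat.eq_of_mul_eq_mul_left (NeZero.pos r) (htotal.symm.trans ?_)
  rw [h, mul_comm]

omit [NeZero q] [NeZero r] in
lemma mul_eq_zero_of_castHom_eq_zero (h : q = k * r) (hkr : k ∣ r) {x y : ZMod q}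
    (hx : ZMod.castHom (h ▸ dvd_mul_left r k) (ZMod r) x = 0)
    (hy : ZMod.castHom (h ▸ dvd_mul_left r k) (ZMod r) y = 0) : x * y = 0 := by
  obtain ⟨a, rfl⟩ := ZMod.intCast_surjective x
  obtain ⟨b, rfl⟩ := ZMod.intCast_surjective y
  rw [map_intCast, ZMod.intCast_zmod_eq_zero_iff_dvd] at hx hy
  rw [← Int.cast_mul, ZMod.intCast_zmod_eq_zero_iff_dvd, h, Nat.cast_mul]
  exact mul_dvd_mul ((Int.natCast_dvd_natCast.mpr hkr).trans hx) hy

lemma unitZeroSum_natCast_smul (h : q = k * r) (hkr : k ∣ r) {α : ι → ℤ} {i : ι}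
    (hi : IsUnit (2 * (α i : ZMod r))) (m : ι → ℤ) :
    unitZeroSum q α ((k : ℤ) • m) = k ^ (Fintype.card ι - 1) * unitZeroSum r α m := by
  classical
  set φ := ZMod.castHom (h ▸ dvd_mul_left r k : r ∣ q) (ZMod r)
  have hcomp (x : ι → ℤ) : φ ∘ (fun j => (x j : ZMod q)) = fun j => (x j : ZMod r) := by
    ext; simp
  have hlift := sum_unitZeros_comp (φ := φ) (ZMod.castHom_surjective _)
    (fun x y => mul_eq_zero_of_castHom_eq_zero h hkr) (α := fun j => (α j : ZMod q)) (i := i)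
    (by simpa using hi) fun a => ZMod.stdAddChar ((fun j => (m j : ZMod r)) ⬝ᵥ a)
  rw [hcomp, card_ker_castHom h, nsmul_eq_mul, Nat.cast_pow] at hlift
  rw [unitZeroSum, unitZeroSum, ← hlift]
  refine sum_congr rfl fun b _ => ?_
  rw [← hcomp m, ← RingHom.map_dotProduct, ← stdAddChar_natCast_mul h, ← smul_eq_mul,
    ← smul_dotProduct]
  congr 2
  ext j
  simp

end Modulus

section Prime

variable {p : ℕ} [hp : Fact p.Prime] {n : ℕ}

lemma unitZeroSum_prime_pow_smul {ι : Type*} [Fintype ι] (hn : n ≠ 0)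
    (hp2 : 2 < p) {α : ι → ℤ} {i : ι} (hi : ¬ (p : ℤ) ∣ α i) (m : ι → ℤ) (k : ℕ) :
    unitZeroSum (p ^ (n + k)) α ((p : ℤ) ^ k • m) =
      (p : ℂ) ^ (k * (Fintype.card ι - 1)) * unitZeroSum (p ^ n) α m := by
  induction k with
  | zero => simp
  | succ k ih =>
    have hunit : IsUnit (2 * (α i : ZMod (p ^ (n + k)))) :=
      (isUnit_two_zmod_prime_pow hp2).mul ((isUnit_intCast_zmod_prime_pow_iff (by omega)).mpr hi)
    rw [pow_succ', mul_smul, unitZeroSum_natCast_smul (q := p ^ (n + (k + 1))) (pow_succ' p (n + k))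
      (dvd_pow_self p (by omega)) hunit, ih]
    ring

lemma card_unitZeros_intCast_prime (hp2 : 2 < p) {α : Fin 3 → ℤ} (hα : ∀ i, ¬ (p : ℤ) ∣ α i) :
    (#(unitZeros fun i => (α i : ZMod p)) : ℤ) =
      (p - (2 + legendreSym p (-(α 0 * α 1)) + legendreSym p (-(α 0 * α 2)) +
        legendreSym p (-(α 1 * α 2)))) * (p - 1) := by
  have hF : ringChar (ZMod p) ≠ 2 := by rw [ZMod.ringChar_zmod_n]; omega
  rw [card_unitZeros_field hF fun i => by
    rw [Ne, ZMod.intCast_zmod_eq_zero_iff_dvd]; exact hα i, ZMod.card]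
  simp [legendreSym]

lemma unitZeroSum_prime_pow_zero (hn : n ≠ 0) (hp2 : 2 < p) {α : Fin 3 → ℤ}
    (hα : ∀ i, ¬ (p : ℤ) ∣ α i) :
    unitZeroSum (p ^ n) α 0 = (p : ℂ) ^ (2 * (n - 1)) *
      ((p - (2 + legendreSym p (-(α 0 * α 1)) + legendreSym p (-(α 0 * α 2)) +
        legendreSym p (-(α 1 * α 2)))) * (p - 1)) := by
  obtain ⟨k, rfl⟩ := Nat.exists_eq_add_of_le (Nat.one_le_iff_ne_zero.mpr hn)
  have hcard := congrArg (Int.cast (R := ℂ)) (card_unitZeros_intCast_prime hp2 hα)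
  have hlift := unitZeroSum_prime_pow_smul one_ne_zero hp2 (hα 0) 0 k
  simp only [smul_zero, pow_one, unitZeroSum_zero p, Fintype.card_fin] at hlift
  push_cast at hcard
  rw [hlift, hcard, Nat.add_sub_cancel_left, mul_comm 2 k]

end Prime

end Scaling

section IntegralCone

open Finset

section General

variable {ι : Type*} [Fintype ι]

lemma diagForm_eq_dotProduct {R : Type*} [CommRing R] (β x : ι → R) :
    diagForm β x = (β * x) ⬝ᵥ x := by
  simp only [diagForm, dotProduct, Pi.mul_apply, mul_assoc, sq]

/-- The sum of the absolute values of the coefficients of an integral diagonal form. -/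
def diagHeight (β : ι → ℤ) : ℕ := ∑ i, (β i).natAbs

lemma diagHeight_pos {β : ι → ℤ} {i : ι} (hi : β i ≠ 0) : 0 < diagHeight β :=
  (Int.natAbs_pos.mpr hi).trans_le
    (single_le_sum (f := fun i => (β i).natAbs) (fun _ _ => Nat.zero_le _) (mem_univ i))

lemma abs_mul_dotProduct_le (β : ι → ℤ) {x y : ι → ℤ} {Y : ℤ} (hx : ∀ i, |x i| ≤ Y)
    (hy : ∀ i, |y i| ≤ Y) : |(β * x) ⬝ᵥ y| ≤ diagHeight β * Y ^ 2 := by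
  rw [diagHeight, Nat.cast_sum, sum_mul]
  refine (abs_sum_le_sum_abs _ _).trans (sum_le_sum fun i _ => ?_)
  rw [Pi.mul_apply, abs_mul, abs_mul, mul_assoc, Int.natCast_natAbs, sq]
  exact mul_le_mul_of_nonneg_left (mul_le_mul (hx i) (hy i) (abs_nonneg _)
    ((abs_nonneg _).trans (hx i))) (abs_nonneg _)

lemma exists_smul_gcd_eq_one {m : ι → ℤ} (hm : m ≠ 0) :
    ∃ (d : ℕ) (u : ι → ℤ), 0 < d ∧ m = (d : ℤ) • u ∧ univ.gcd u = 1 := by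
  obtain ⟨i, hi⟩ := Function.ne_iff.mp hm
  obtain ⟨u, hmu, hu⟩ := extract_gcd m ⟨i, mem_univ i⟩
  have hd : univ.gcd m ≠ 0 := fun h => hi (gcd_eq_zero_iff.mp h i (mem_univ i))
  refine ⟨(univ.gcd m).natAbs, u, Int.natAbs_pos.mpr hd, funext fun j => ?_, hu⟩
  rw [Int.natCast_natAbs, Int.abs_eq_normalize, Finset.normalize_gcd]
  exact hmu j (mem_univ j)

lemma exists_prime_pow_smul {ι : Type*} [Finite ι] {p : ℕ} [hp : Fact p.Prime] {m : ι → ℤ}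
    (hm : m ≠ 0) : ∃ (k : ℕ) (u : ι → ℤ) (i : ι), m = (p : ℤ) ^ k • u ∧ ¬ (p : ℤ) ∣ u i := by
  cases nonempty_fintype ι
  have hpZ : Prime (p : ℤ) := Nat.prime_iff_prime_int.mp hp.out
  obtain ⟨d, u, hd, rfl, hu⟩ := exists_smul_gcd_eq_one hm
  obtain ⟨k, g, hg, rfl⟩ := Nat.exists_eq_pow_mul_and_not_dvd hd.ne' p hp.out.ne_one
  obtain ⟨i, hi⟩ : ∃ i, ¬ (p : ℤ) ∣ u i := by
    by_contra! h
    exact hpZ.not_dvd_one (hu ▸ dvd_gcd fun i _ => h i)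
  refine ⟨k, (g : ℤ) • u, i, by rw [smul_smul]; push_cast; rfl, fun h => ?_⟩
  exact (hpZ.dvd_or_dvd h).elim (mt Int.natCast_dvd_natCast.mp hg) hi

lemma abs_le_div_of_abs_mul_le {d X : ℕ} (hd : 0 < d) {x : ℤ} (h : |(d : ℤ) * x| ≤ X) :
    |x| ≤ ((X / d : ℕ) : ℤ) := by
  rw [abs_mul, Nat.abs_cast, mul_comm] at h
  rw [Int.natCast_div]
  exact Int.le_ediv_of_mul_le (by exact_mod_cast hd) h

lemma abs_eq_abs_of_smul_eq_smul {u v : ι → ℤ} (hu : univ.gcd u = 1) (hv : univ.gcd v = 1)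
    {c e : ℤ} (h : c • u = e • v) : |c| = |e| := by
  have hgcd := congrArg univ.gcd h
  rw [show c • u = fun i => c * u i from rfl, show e • v = fun i => e * v i from rfl,
    Finset.gcd_mul_left, Finset.gcd_mul_left, hu, hv, mul_one, mul_one] at hgcd
  rwa [Int.abs_eq_normalize, Int.abs_eq_normalize]

variable [DecidableEq ι]

/-- The integral zeros of the diagonal form with coefficients `β` of height at most `X` with
coordinates prime to `p`. -/
noncomputable def conePoints (p : ℕ) (β : ι → ℤ) (X : ℕ) : Finset (ι → ℤ) :=
  {m ∈ Fintype.piFinset fun _ => Icc (-X : ℤ) X | (∀ i, ¬ (p : ℤ) ∣ m i) ∧ diagForm β m = 0}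

lemma mem_conePoints {p : ℕ} {β : ι → ℤ} {X : ℕ} {m : ι → ℤ} :
    m ∈ conePoints p β X ↔
      (∀ i, |m i| ≤ X) ∧ (∀ i, ¬ (p : ℤ) ∣ m i) ∧ diagForm β m = 0 := by
  simp only [conePoints, mem_filter, Fintype.mem_piFinset, mem_Icc, abs_le]

lemma conePoints_subset_biUnion [Nonempty ι] (p : ℕ) (β : ι → ℤ) (X : ℕ) :
    conePoints p β X ⊆ (Icc 1 X).biUnion fun d =>
      {u ∈ conePoints p β (X / d) | univ.gcd u = 1}.image fun u => (d : ℤ) • u := by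
  intro m hm
  obtain ⟨hX, hndvd, hzero⟩ := mem_conePoints.mp hm
  have i := Classical.arbitrary ι
  obtain ⟨d, u, hd, rfl, hu⟩ := exists_smul_gcd_eq_one (m := m) fun h => hndvd i (by simp [h])
  have hbound (j : ι) : |u j| ≤ ((X / d : ℕ) : ℤ) := abs_le_div_of_abs_mul_le hd (hX j)
  have hdX : d ≤ X := by
    by_contra! h
    have hui := hbound i
    rw [Nat.div_eq_of_lt h, Nat.cast_zero, abs_nonpos_iff] at hui
    exact hndvd i (by simp [hui])
  rw [diagForm_smul] at hzero
  exact mem_biUnion.mpr ⟨d, mem_Icc.mpr ⟨hd, hdX⟩, mem_image_of_mem _ (mem_filter.mpr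
    ⟨mem_conePoints.mpr ⟨hbound, fun j h => hndvd j (h.mul_left _),
      (mul_eq_zero.mp hzero).resolve_left (pow_ne_zero 2 (by exact_mod_cast hd.ne'))⟩, hu⟩)⟩

end General

section Ternary

lemma smul_eq_smul_of_isotropic {R : Type*} [CommRing R] [IsDomain R] {β u v : Fin 3 → R}
    (hβ : ∀ i, β i ≠ 0) (hu : diagForm β u = 0) (hv : diagForm β v = 0)
    (huv : (β * u) ⬝ᵥ v = 0) : v 0 • u = u 0 • v := by
  simp only [diagForm, dotProduct, Fin.sum_univ_three, Pi.mul_apply] at hu hv huv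
  have h1 : β 0 * β 1 * (v 0 * u 1 - u 0 * v 1) ^ 2 = 0 := by
    linear_combination (β 0 * v 0 ^ 2 + β 1 * v 1 ^ 2) * hu - β 2 * u 2 ^ 2 * hv -
      (β 0 * u 0 * v 0 + β 1 * u 1 * v 1 - β 2 * u 2 * v 2) * huv
  have h2 : β 0 * β 2 * (v 0 * u 2 - u 0 * v 2) ^ 2 = 0 := by
    linear_combination (β 0 * v 0 ^ 2 + β 2 * v 2 ^ 2) * hu - β 1 * u 1 ^ 2 * hv -
      (β 0 * u 0 * v 0 + β 2 * u 2 * v 2 - β 1 * u 1 * v 1) * huv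
  simp only [mul_eq_zero, hβ, pow_eq_zero_iff two_ne_zero, false_or, sub_eq_zero] at h1 h2
  ext i
  fin_cases i
  exacts [mul_comm _ _, h1, h2]

variable {p : ℕ} [hp : Fact p.Prime]

-- Polarization: the form at `v₀u - u₀v` is `-2u₀v₀` times the bilinear form at `(u, v)`.
lemma prime_pow_dvd_mul_dotProduct {ι : Type*} [Fintype ι] (hp2 : 2 < p) {β u v : ι → ℤ} {i : ι}
    {K : ℕ} (hui : ¬ (p : ℤ) ∣ u i) (hvi : ¬ (p : ℤ) ∣ v i) (hu : diagForm β u = 0)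
    (hv : diagForm β v = 0) (h : ∀ j, (p : ℤ) ^ K ∣ v i * u j - u i * v j) :
    (p : ℤ) ^ (2 * K) ∣ (β * u) ⬝ᵥ v := by
  have hpZ : Prime (p : ℤ) := Nat.prime_iff_prime_int.mp hp.out
  have htwo : ¬ (p : ℤ) ∣ 2 := by exact_mod_cast Nat.not_dvd_of_pos_of_lt two_pos hp2
  have hcop : IsCoprime ((p : ℤ) ^ (2 * K)) (2 * u i * v i) := by
    refine IsCoprime.pow_left ((Prime.coprime_iff_not_dvd hpZ).mpr ?_)
    simp [hpZ.dvd_mul, htwo, hui, hvi]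
  have hdvd : (p : ℤ) ^ (2 * K) ∣ diagForm β (v i • u - u i • v) :=
    dvd_sum fun j _ => Dvd.dvd.mul_left (by rw [pow_mul']; exact pow_dvd_pow_of_dvd (h j) 2) _
  have hpolar : diagForm β (v i • u - u i • v) = -(2 * u i * v i * (β * u) ⬝ᵥ v) := by
    rw [sub_eq_add_neg, ← neg_smul, diagForm_add_smul, diagForm_smul, hu, hv, mul_smul_comm,
      smul_dotProduct, smul_eq_mul]
    ring
  exact hcop.dvd_of_dvd_mul_left ((dvd_neg.mp (hpolar ▸ hdvd)))

lemma smul_eq_smul_of_mem_conePoints (hp2 : 2 < p) {β : Fin 3 → ℤ} (hβ : ∀ i, β i ≠ 0) {Y K : ℕ}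
    (hK : diagHeight β * Y ^ 2 < p ^ (2 * K)) {u v : Fin 3 → ℤ} (hu : u ∈ conePoints p β Y)
    (hv : v ∈ conePoints p β Y) (h : ∀ j, (p : ℤ) ^ K ∣ v 0 * u j - u 0 * v j) :
    v 0 • u = u 0 • v := by
  rw [mem_conePoints] at hu hv
  have hdvd := prime_pow_dvd_mul_dotProduct hp2 (hu.2.1 0) (hv.2.1 0) hu.2.2 hv.2.2 h
  refine smul_eq_smul_of_isotropic hβ hu.2.2 hv.2.2 (Int.eq_zero_of_abs_lt_dvd hdvd ?_)
  exact (abs_mul_dotProduct_le β hu.1 hv.1).trans_lt (by exact_mod_cast hK)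

/-- The point of the affine chart `x₀ = 1` modulo `p ^ K` on the line through `u`, together with
the sign of `u₀`. -/
noncomputable def projectiveResidue (p K : ℕ) (u : Fin 3 → ℤ) : (Fin 3 → ZMod (p ^ K)) × SignType :=
  ((u 0 : ZMod (p ^ K))⁻¹ • fun i => (u i : ZMod (p ^ K)), SignType.sign (u 0))

lemma injOn_projectiveResidue (hp2 : 2 < p) {β : Fin 3 → ℤ} (hβ : ∀ i, β i ≠ 0) {Y K : ℕ}
    (hK0 : K ≠ 0) (hK : diagHeight β * Y ^ 2 < p ^ (2 * K)) :
    Set.InjOn (projectiveResidue p K) {u ∈ conePoints p β Y | univ.gcd u = 1} := by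
  rintro u ⟨hu, hgu⟩ v ⟨hv, hgv⟩ h
  obtain ⟨hres, hsign⟩ := Prod.mk.inj h
  have hu0 := (mem_conePoints.mp hu).2.1 0
  have hv0 := (mem_conePoints.mp hv).2.1 0
  have hprop : v 0 • u = u 0 • v := by
    refine smul_eq_smul_of_mem_conePoints hp2 hβ hK hu hv fun j => ?_
    rw [← isUnit_intCast_zmod_prime_pow_iff hK0] at hu0 hv0
    have hj : (u 0 : ZMod (p ^ K))⁻¹ * u j = (v 0 : ZMod (p ^ K))⁻¹ * v j := congrFun hres j
    rw [← Nat.cast_pow, ← ZMod.intCast_zmod_eq_zero_iff_dvd]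
    push_cast
    linear_combination (u 0 * v 0 : ZMod (p ^ K)) * hj -
      (v 0 * u j : ZMod (p ^ K)) * ZMod.mul_inv_of_unit _ hu0 +
      (u 0 * v j : ZMod (p ^ K)) * ZMod.mul_inv_of_unit _ hv0
  have h0 : u 0 = v 0 := by
    rw [← sign_mul_abs (u 0), hsign, abs_eq_abs_of_smul_eq_smul hgv hgu hprop.symm, sign_mul_abs]
  rw [h0] at hprop
  exact smul_right_injective _ (fun h : v 0 = 0 => hv0 (h ▸ dvd_zero _)) hprop

lemma card_filter_unitZeros_eq_one_le {K : ℕ} (hp2 : 2 < p) (hK0 : K ≠ 0)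
    {α : Fin 3 → ZMod (p ^ K)} (hα : IsUnit (α 2)) :
    #{a ∈ unitZeros α | a 0 = 1} ≤ 2 * p ^ K := by
  have := isLocalRing_zmod_prime_pow (p := p) hK0
  refine (card_le_two_mul_card_image_of_subset_unitZeros (isUnit_two_zmod_prime_pow hp2) hα
    (filter_subset _ _)).trans (Nat.mul_le_mul_left 2 ?_)
  calc #({a ∈ unitZeros α | a 0 = 1}.image fun a => (a 0, a 1))
      ≤ #(({1} : Finset (ZMod (p ^ K))) ×ˢ (univ : Finset (ZMod (p ^ K)))) :=
        card_le_card fun x hx => by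
          obtain ⟨a, ha, rfl⟩ := mem_image.mp hx
          simp [(mem_filter.mp ha).2]
    _ = p ^ K := by rw [card_product, card_singleton, one_mul, card_univ, ZMod.card]

lemma projectiveResidue_mem {β : Fin 3 → ℤ} {Y K : ℕ} (hK0 : K ≠ 0) {u : Fin 3 → ℤ}
    (hu : u ∈ conePoints p β Y) :
    projectiveResidue p K u ∈
      {a ∈ unitZeros fun i => (β i : ZMod (p ^ K)) | a 0 = 1} ×ˢ ({-1, 1} : Finset SignType) := by
  obtain ⟨-, hndvd, hzero⟩ := mem_conePoints.mp hu
  have hunit (i : Fin 3) := (isUnit_intCast_zmod_prime_pow_iff hK0).mpr (hndvd i)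
  have hmod := map_diagForm (Int.castRingHom (ZMod (p ^ K))) β u
  rw [hzero, map_zero] at hmod
  have hsign : SignType.sign (u 0) ≠ 0 :=
    sign_ne_zero.mpr fun h : u 0 = 0 => hndvd 0 (h ▸ dvd_zero _)
  refine mem_product.mpr ⟨mem_filter.mpr ⟨smul_mem_unitZeros
    (IsUnit.of_mul_eq_one _ (ZMod.inv_mul_of_unit _ (hunit 0)))
    (mem_unitZeros.mpr ⟨hunit, hmod.symm⟩), ZMod.inv_mul_of_unit _ (hunit 0)⟩, ?_⟩
  rcases (SignType.sign (u 0)).trichotomy with h | h | h <;> simp_all [projectiveResidue]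

lemma card_primitive_conePoints_le_prime_pow (hp2 : 2 < p) {β : Fin 3 → ℤ}
    (hβ : ∀ i, ¬ (p : ℤ) ∣ β i) {Y K : ℕ} (hK0 : K ≠ 0)
    (hK : diagHeight β * Y ^ 2 < p ^ (2 * K)) :
    #{u ∈ conePoints p β Y | univ.gcd u = 1} ≤ 4 * p ^ K := by
  have hinj := injOn_projectiveResidue hp2 (fun i (h : β i = 0) => hβ i (h ▸ dvd_zero _)) hK0 hK
  calc #{u ∈ conePoints p β Y | univ.gcd u = 1}
      ≤ #({a ∈ unitZeros fun i => (β i : ZMod (p ^ K)) | a 0 = 1} ×ˢ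
          ({-1, 1} : Finset SignType)) :=
        card_le_card_of_injOn _ (fun u hu => projectiveResidue_mem hK0 (mem_filter.mp hu).1)
          (by simpa using hinj)
    _ ≤ 2 * p ^ K * 2 := by
        rw [card_product]
        exact Nat.mul_le_mul (card_filter_unitZeros_eq_one_le hp2 hK0
          ((isUnit_intCast_zmod_prime_pow_iff hK0).mpr (hβ 2))) card_le_two
    _ = 4 * p ^ K := by ring

lemma card_primitive_conePoints_le (hp2 : 2 < p) {β : Fin 3 → ℤ} (hβ : ∀ i, ¬ (p : ℤ) ∣ β i)
    {Y : ℕ} (hY : 0 < Y) :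
    #{u ∈ conePoints p β Y | univ.gcd u = 1} ≤ 4 * p * diagHeight β * Y := by
  set H := diagHeight β
  have hpos : 0 < H := diagHeight_pos fun h : β 0 = 0 => hβ 0 (h ▸ dvd_zero _)
  have hK : H * Y ^ 2 < p ^ (2 * (Nat.log p (H * Y) + 1)) := calc
    H * Y ^ 2 ≤ (H * Y) ^ 2 := by
      rw [mul_pow]
      exact Nat.mul_le_mul_right _ (Nat.le_self_pow two_ne_zero H)
    _ < (p ^ (Nat.log p (H * Y) + 1)) ^ 2 :=
      Nat.pow_lt_pow_left (Nat.lt_pow_succ_log_self hp.out.one_lt _) two_ne_zero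
    _ = p ^ (2 * (Nat.log p (H * Y) + 1)) := by rw [← pow_mul, mul_comm]
  refine (card_primitive_conePoints_le_prime_pow hp2 hβ (Nat.succ_ne_zero _) hK).trans ?_
  have hlog := Nat.pow_log_le_self p (mul_pos hpos hY).ne'
  calc 4 * p ^ (Nat.log p (H * Y) + 1) = 4 * p * p ^ Nat.log p (H * Y) := by ring
    _ ≤ 4 * p * (H * Y) := Nat.mul_le_mul_left _ hlog
    _ = 4 * p * H * Y := by ring

-- Stratifying by the gcd `d` of the coordinates leads to the harmonic sum of `X / d`.
lemma card_conePoints_le (hp2 : 2 < p) {β : Fin 3 → ℤ} (hβ : ∀ i, ¬ (p : ℤ) ∣ β i) (X : ℕ) :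
    (#(conePoints p β X) : ℝ) ≤ 4 * p * diagHeight β * X * (1 + Real.log X) := by
  have hcard : #(conePoints p β X) ≤ ∑ d ∈ Icc 1 X, 4 * p * diagHeight β * (X / d) := by
    refine (card_le_card (conePoints_subset_biUnion p β X)).trans (card_biUnion_le.trans
      (sum_le_sum fun d hd => card_image_le.trans ?_))
    rw [mem_Icc] at hd
    exact card_primitive_conePoints_le hp2 hβ (Nat.div_pos hd.2 hd.1)
  calc (#(conePoints p β X) : ℝ)
      ≤ ((∑ d ∈ Icc 1 X, 4 * p * diagHeight β * (X / d) : ℕ) : ℝ) := by exact_mod_cast hcard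
    _ ≤ ∑ d ∈ Icc 1 X, 4 * p * diagHeight β * ((X : ℝ) * (d : ℝ)⁻¹) := by
        push_cast
        gcongr
        rw [← div_eq_mul_inv]
        exact Nat.cast_div_le
    _ = 4 * p * diagHeight β * X * (harmonic X : ℝ) := by
        rw [harmonic_eq_sum_Icc, ← mul_sum, ← mul_sum, mul_assoc _ (X : ℝ)]
        push_cast
        rfl
    _ ≤ 4 * p * diagHeight β * X * (1 + Real.log X) := by
        gcongr
        exact harmonic_le_one_add_log X

end Ternary

end IntegralCone

section LowFrequencies

open Finset

lemma mul_div_pow_sq_lt {p n H R k : ℕ} (hR : H * R ^ 2 < p ^ (n + k)) :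
    H * (R / p ^ k) ^ 2 < p ^ n := by
  refine lt_of_mul_lt_mul_right (a := p ^ k) ?_ (Nat.zero_le _)
  calc H * (R / p ^ k) ^ 2 * p ^ k ≤ H * (R / p ^ k) ^ 2 * (p ^ k) ^ 2 :=
        Nat.mul_le_mul_left _ (Nat.le_self_pow two_ne_zero _)
    _ = H * (R / p ^ k * p ^ k) ^ 2 := by rw [mul_pow, mul_assoc]
    _ ≤ H * R ^ 2 := by gcongr; exact Nat.div_mul_le_self _ _
    _ < p ^ n * p ^ k := by rwa [← pow_add]

variable {p : ℕ} [hp : Fact p.Prime] {n : ℕ} {α m : Fin 3 → ℤ}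

lemma not_dvd_dualCoeff (hα : ∀ i, ¬ (p : ℤ) ∣ α i) (i : Fin 3) : ¬ (p : ℤ) ∣ dualCoeff α i := by
  have hpZ : Prime (p : ℤ) := Nat.prime_iff_prime_int.mp hp.out
  fin_cases i <;> simp [dualCoeff, hpZ.dvd_mul, hα]

lemma exists_mem_stationaryZeros_of_unitZeroSum_ne_zero {ι : Type*} [Fintype ι] [DecidableEq ι]
    {i : ℕ} (hi : n ≤ 2 * i) {α m : ι → ℤ} (hsum : unitZeroSum (p ^ n) α m ≠ 0) :
    ∃ a, a ∈ stationaryZeros ((p : ZMod (p ^ n)) ^ i) p (fun j => (α j : ZMod (p ^ n)))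
      fun j => (m j : ZMod (p ^ n)) := by
  rw [unitZeroSum_eq_sum_stationaryZeros hi] at hsum
  obtain ⟨a, ha, -⟩ := exists_ne_zero_of_sum_ne_zero hsum
  exact ⟨a, ha⟩

lemma not_dvd_of_unitZeroSum_ne_zero {ι : Type*} [Fintype ι] (hn : 2 ≤ n) {α m : ι → ℤ}
    (hα : ∀ i, ¬ (p : ℤ) ∣ α i) {j : ι} (hj : ¬ (p : ℤ) ∣ m j)
    (hsum : unitZeroSum (p ^ n) α m ≠ 0) (k : ι) : ¬ (p : ℤ) ∣ m k := by
  classical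
  obtain ⟨a, ha⟩ := exists_mem_stationaryZeros_of_unitZeroSum_ne_zero (i := n - n / 2)
    (by omega) hsum
  exact not_dvd_of_mem_stationaryZeros (by omega) hα ha hj k

lemma norm_unitZeroSum_le (hn : 2 ≤ n) (hp2 : 2 < p) (hα : ∀ i, ¬ (p : ℤ) ∣ α i) {j : Fin 3}
    (hj : ¬ (p : ℤ) ∣ m j) :
    ‖unitZeroSum (p ^ n) α m‖ ≤ 2 * (p : ℝ) ^ (2 * n - n / 2) := by
  by_cases hsum : unitZeroSum (p ^ n) α m = 0
  · rw [hsum, norm_zero]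
    positivity
  have hcard := card_stationaryZeros_le (i := n - n / 2) (by omega) hp2 hα
    (not_dvd_of_unitZeroSum_ne_zero hn hα hj hsum 0) (p : ZMod (p ^ n))
  rw [show n + (n - n / 2) = 2 * n - n / 2 by omega] at hcard
  rw [unitZeroSum_eq_sum_stationaryZeros (i := n - n / 2) (by omega)]
  refine (norm_sum_le _ _).trans ?_
  simp only [AddChar.norm_apply, sum_const, nsmul_one]
  exact_mod_cast hcard

lemma mem_conePoints_of_unitZeroSum_ne_zero (hn : 2 ≤ n) (hα : ∀ i, ¬ (p : ℤ) ∣ α i) {Y : ℕ}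
    (hY : diagHeight (dualCoeff α) * Y ^ 2 < p ^ (n - 1)) (hmY : ∀ i, |m i| ≤ Y) {j : Fin 3}
    (hj : ¬ (p : ℤ) ∣ m j) (hsum : unitZeroSum (p ^ n) α m ≠ 0) :
    m ∈ conePoints p (dualCoeff α) Y := by
  obtain ⟨a, ha⟩ := exists_mem_stationaryZeros_of_unitZeroSum_ne_zero (i := n - n / 2)
    (by omega) hsum
  have hdvd := dvd_diagForm_dualCoeff_of_mem_stationaryZeros (by omega) (by omega) (hα 0) ha
  refine mem_conePoints.mpr ⟨hmY, not_dvd_of_unitZeroSum_ne_zero hn hα hj hsum,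
    Int.eq_zero_of_abs_lt_dvd hdvd ?_⟩
  rw [diagForm_eq_dotProduct]
  exact (abs_mul_dotProduct_le _ hmY hmY).trans_lt (by exact_mod_cast hY)

lemma two_mul_lt_of_abs_prime_pow_mul_le {H R k : ℕ} (hH : 0 < H) (hR : H * R ^ 2 < p ^ n) {x : ℤ}
    (hx : x ≠ 0) (hxR : |(p : ℤ) ^ k * x| ≤ R) : 2 * k < n := by
  have hkR : p ^ k ≤ R := by
    rw [abs_mul, abs_pow, Nat.abs_cast] at hxR
    exact_mod_cast (le_mul_of_one_le_right (by positivity) (Int.one_le_abs hx)).trans hxR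
  refine (Nat.pow_lt_pow_iff_right hp.out.one_lt).mp (lt_of_le_of_lt ?_ hR)
  calc p ^ (2 * k) = (p ^ k) ^ 2 := by rw [← pow_mul, mul_comm]
    _ ≤ R ^ 2 := Nat.pow_le_pow_left hkR 2
    _ ≤ H * R ^ 2 := Nat.le_mul_of_pos_left _ hH

lemma exists_conePoints_of_unitZeroSum_ne_zero (hp2 : 2 < p) (hα : ∀ i, ¬ (p : ℤ) ∣ α i) {R : ℕ}
    (hR : diagHeight (dualCoeff α) * R ^ 2 < p ^ (n - 1)) (hm : m ≠ 0) (hmR : ∀ i, |m i| ≤ R)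
    (hsum : unitZeroSum (p ^ n) α m ≠ 0) :
    ∃ k < n, (∃ u ∈ conePoints p (dualCoeff α) (R / p ^ k), (p : ℤ) ^ k • u = m) ∧
      ‖unitZeroSum (p ^ n) α m‖ ≤ 2 * (p : ℝ) ^ (2 * n - (n - k) / 2) := by
  obtain ⟨k, u, i, rfl, hi⟩ := exists_prime_pow_smul (p := p) hm
  have hkn : 2 * k < n - 1 := two_mul_lt_of_abs_prime_pow_mul_le
    (diagHeight_pos fun h : dualCoeff α 0 = 0 => not_dvd_dualCoeff hα 0 (h ▸ dvd_zero _)) hR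
    (fun h : u i = 0 => hi (h ▸ dvd_zero _)) (hmR i)
  obtain ⟨j, rfl⟩ : ∃ j, n = j + k := ⟨n - k, by omega⟩
  have hj : 2 ≤ j := by omega
  rw [unitZeroSum_prime_pow_smul (by omega) hp2 (hα 0)] at hsum ⊢
  rw [show j + k - 1 = j - 1 + k by omega] at hR
  refine ⟨k, by omega, ⟨u, mem_conePoints_of_unitZeroSum_ne_zero hj hα (mul_div_pow_sq_lt hR)
    (fun l => abs_le_div_of_abs_mul_le (pow_pos hp.out.pos k) ?_) hi (right_ne_zero_of_mul hsum),
    rfl⟩, ?_⟩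
  · exact_mod_cast hmR l
  · rw [norm_mul, norm_pow, Complex.norm_natCast, Fintype.card_fin]
    calc (p : ℝ) ^ (k * 2) * ‖unitZeroSum (p ^ j) α u‖
        ≤ (p : ℝ) ^ (k * 2) * (2 * (p : ℝ) ^ (2 * j - j / 2)) := by
          gcongr
          exact norm_unitZeroSum_le hj hp2 hα hi
      _ = 2 * (p : ℝ) ^ (k * 2 + (2 * j - j / 2)) := by rw [pow_add]; ring
      _ = 2 * (p : ℝ) ^ (2 * (j + k) - (j + k - k) / 2) := by congr 2; omega

lemma card_conePoints_div_mul_pow_le (hp2 : 2 < p) {β : Fin 3 → ℤ} (hβ : ∀ i, ¬ (p : ℤ) ∣ β i)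
    (R n k : ℕ) :
    (#(conePoints p β (R / p ^ k)) : ℝ) * (2 * (p : ℝ) ^ (2 * n - (n - k) / 2)) ≤
      8 * p * diagHeight β * R * (1 + Real.log R) * (p : ℝ) ^ (2 * n - n / 2) := by
  have : (0 : ℝ) < p := by exact_mod_cast hp.out.pos
  have hRk : ((R / p ^ k : ℕ) : ℝ) ≤ R / p ^ k := by
    exact_mod_cast Nat.cast_div_le (α := ℝ) (m := R) (n := p ^ k)
  have hlog : Real.log ((R / p ^ k : ℕ) : ℝ) ≤ Real.log R := by
    rcases Nat.eq_zero_or_pos (R / p ^ k) with h | h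
    · rw [h, Nat.cast_zero, Real.log_zero]
      exact Real.log_natCast_nonneg R
    · exact Real.log_le_log (by exact_mod_cast h) (by exact_mod_cast Nat.div_le_self R (p ^ k))
  have hpow : (p : ℝ) ^ (2 * n - (n - k) / 2) ≤ (p : ℝ) ^ (2 * n - n / 2) * (p : ℝ) ^ k := by
    rw [← pow_add]
    exact pow_le_pow_right₀ (by exact_mod_cast hp.out.one_le) (by omega)
  calc (#(conePoints p β (R / p ^ k)) : ℝ) * (2 * (p : ℝ) ^ (2 * n - (n - k) / 2))
      ≤ (4 * p * diagHeight β * ((R / p ^ k : ℕ) : ℝ) * (1 + Real.log ((R / p ^ k : ℕ) : ℝ))) *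
          (2 * ((p : ℝ) ^ (2 * n - n / 2) * (p : ℝ) ^ k)) := by
        gcongr
        exact card_conePoints_le hp2 hβ _
    _ ≤ (4 * p * diagHeight β * (R / p ^ k) * (1 + Real.log R)) *
          (2 * ((p : ℝ) ^ (2 * n - n / 2) * (p : ℝ) ^ k)) := by gcongr
    _ = 8 * p * diagHeight β * R * (1 + Real.log R) * (p : ℝ) ^ (2 * n - n / 2) := by
        field_simp
        ring

lemma sum_norm_unitZeroSum_le (hp2 : 2 < p) (hα : ∀ i, ¬ (p : ℤ) ∣ α i) {R : ℕ}
    (hR : diagHeight (dualCoeff α) * R ^ 2 < p ^ (n - 1)) {S : Finset (Fin 3 → ℤ)}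
    (hS : ∀ m ∈ S, m ≠ 0 ∧ ∀ i, |m i| ≤ R) :
    ∑ m ∈ S, ‖unitZeroSum (p ^ n) α m‖ ≤
      8 * p * diagHeight (dualCoeff α) * n * R * (1 + Real.log R) * (p : ℝ) ^ (2 * n - n / 2) := by
  let T (k : ℕ) : Finset (Fin 3 → ℤ) :=
    (conePoints p (dualCoeff α) (R / p ^ k)).image fun u => (p : ℤ) ^ k • u
  let B (k : ℕ) : ℝ := 2 * (p : ℝ) ^ (2 * n - (n - k) / 2)
  have hterm (m : Fin 3 → ℤ) (hm : m ∈ S) :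
      ‖unitZeroSum (p ^ n) α m‖ ≤ ∑ k ∈ range n, if m ∈ T k then B k else 0 := by
    have hnonneg (k : ℕ) : 0 ≤ if m ∈ T k then B k else 0 := by positivity
    by_cases hsum : unitZeroSum (p ^ n) α m = 0
    · rw [hsum, norm_zero]
      exact sum_nonneg fun k _ => hnonneg k
    · obtain ⟨k, hk, hmT, hle⟩ := exists_conePoints_of_unitZeroSum_ne_zero hp2 hα hR
        (hS m hm).1 (hS m hm).2 hsum
      refine le_trans ?_ (single_le_sum (fun k _ => hnonneg k) (mem_range.mpr hk))
      rwa [if_pos (show m ∈ T k from mem_image.mpr hmT)]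
  calc ∑ m ∈ S, ‖unitZeroSum (p ^ n) α m‖
      ≤ ∑ m ∈ S, ∑ k ∈ range n, (if m ∈ T k then B k else 0) := sum_le_sum hterm
    _ = ∑ k ∈ range n, (#{m ∈ S | m ∈ T k} : ℝ) * B k := by
        rw [sum_comm]
        simp only [← sum_filter, sum_const, nsmul_eq_mul]
    _ ≤ ∑ k ∈ range n, (#(conePoints p (dualCoeff α) (R / p ^ k)) : ℝ) * B k := by
        refine sum_le_sum fun k _ => mul_le_mul_of_nonneg_right ?_ (by positivity)
        exact_mod_cast (card_le_card (t := T k) fun m hm => (mem_filter.mp hm).2).trans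
          card_image_le
    _ ≤ n * (8 * p * diagHeight (dualCoeff α) * R * (1 + Real.log R) *
          (p : ℝ) ^ (2 * n - n / 2)) := by
        refine (sum_le_card_nsmul _ _ _ fun k _ =>
          card_conePoints_div_mul_pow_le hp2 (not_dvd_dualCoeff hα) R n k).trans_eq ?_
        rw [card_range, nsmul_eq_mul]
    _ = 8 * p * diagHeight (dualCoeff α) * n * R * (1 + Real.log R) *
          (p : ℝ) ^ (2 * n - n / 2) := by ring

end LowFrequencies

section Tail

open Finset

lemma norm_tsum_sub_sum_le {κ E : Type*} [NormedAddCommGroup E] [CompleteSpace E] {T : κ → E}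
    {g : κ → ℝ} (hg : Summable g) (hg0 : ∀ m, 0 ≤ g m) {S : Finset κ}
    (h : ∀ m ∉ S, ‖T m‖ ≤ g m) : ‖∑' m, T m - ∑ m ∈ S, T m‖ ≤ ∑' m, g m := by
  have hT : Summable T := hg.of_norm_bounded_eventually
    (S.finite_toSet.subset fun m hm => by_contra fun hmS => hm (h m hmS))
  rw [← hT.sum_add_tsum_compl (s := S), add_sub_cancel_left]
  exact (tsum_of_norm_bounded (hg.subtype _).hasSum fun m => h m m.2).trans
    (hg.tsum_subtype_le _ _ hg0)

lemma prod_norm_le_of_norm_le {ι κ E : Type*} [Fintype ι] [SeminormedAddCommGroup E] {w : κ → E}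
    {v : κ → ℝ} {D δ : ℝ} (hw : ∀ k, ‖w k‖ ≤ D * v k) {m : ι → κ} {i : ι}
    (hi : ‖w (m i)‖ ≤ δ * v (m i)) :
    ∏ j, ‖w (m j)‖ ≤ δ * D ^ (Fintype.card ι - 1) * ∏ j, v (m j) := by
  classical
  have hrest : ∏ j ∈ univ.erase i, ‖w (m j)‖ ≤ ∏ j ∈ univ.erase i, D * v (m j) :=
    prod_le_prod (fun _ _ => norm_nonneg _) fun j _ => hw (m j)
  rw [prod_mul_distrib, prod_const, card_erase_of_mem (mem_univ i), card_univ] at hrest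
  rw [← mul_prod_erase _ _ (mem_univ i), ← mul_prod_erase _ (fun j => v (m j)) (mem_univ i)]
  calc ‖w (m i)‖ * ∏ j ∈ univ.erase i, ‖w (m j)‖
      ≤ δ * v (m i) * (D ^ (Fintype.card ι - 1) * ∏ j ∈ univ.erase i, v (m j)) :=
        mul_le_mul hi hrest (prod_nonneg fun _ _ => norm_nonneg _) ((norm_nonneg _).trans hi)
    _ = δ * D ^ (Fintype.card ι - 1) * (v (m i) * ∏ j ∈ univ.erase i, v (m j)) := by ring

lemma norm_tsum_prod_mul_sub_le {d : ℕ} {w : ℤ → ℂ} {U : (Fin d → ℤ) → ℂ} {v : ℤ → ℝ}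
    (hv : Summable v) (hv0 : ∀ k, 0 ≤ v k) {C D δ M : ℝ} (hD : 0 ≤ D) (hδ : 0 ≤ δ) {R : ℕ}
    (hU : ∀ m, ‖U m‖ ≤ M) (hC : ∀ k, ‖w k‖ ≤ C) (hw : ∀ k, ‖w k‖ ≤ D * v k)
    (hfar : ∀ k : ℤ, (R : ℤ) < |k| → ‖w k‖ ≤ δ * v k) :
    ‖∑' m : Fin d → ℤ, (∏ i, w (m i)) * U m - w 0 ^ d * U 0‖ ≤
      C ^ d * ∑ m ∈ (Fintype.piFinset fun _ => Icc (-R : ℤ) R).erase 0, ‖U m‖ +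
        δ * D ^ (d - 1) * M * ∑' m : Fin d → ℤ, ∏ i, v (m i) := by
  let S : Finset (Fin d → ℤ) := Fintype.piFinset fun _ => Icc (-R : ℤ) R
  let T (m : Fin d → ℤ) : ℂ := (∏ i, w (m i)) * U m
  have hM : 0 ≤ M := (norm_nonneg _).trans (hU 0)
  have hV : Summable fun m : Fin d → ℤ => ∏ i, v (m i) :=
    .of_norm (summable_norm_prod fun _ => hv.norm)
  have htail : ‖∑' m, T m - ∑ m ∈ S, T m‖ ≤
      ∑' m : Fin d → ℤ, δ * D ^ (d - 1) * M * ∏ i, v (m i) := by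
    refine norm_tsum_sub_sum_le (hV.mul_left _)
      (fun m => mul_nonneg (by positivity) (prod_nonneg fun i _ => hv0 _)) fun m hm => ?_
    obtain ⟨i, hi⟩ : ∃ i, (R : ℤ) < |m i| := by
      simpa only [S, Fintype.mem_piFinset, mem_Icc, ← abs_le, not_forall, not_le] using hm
    have hprod := prod_norm_le_of_norm_le hw (hfar _ hi)
    rw [Fintype.card_fin] at hprod
    calc ‖T m‖ = (∏ i, ‖w (m i)‖) * ‖U m‖ := by rw [norm_mul, norm_prod]
      _ ≤ δ * D ^ (d - 1) * (∏ i, v (m i)) * M :=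
        mul_le_mul hprod (hU m) (norm_nonneg _)
          ((prod_nonneg fun _ _ => norm_nonneg _).trans hprod)
      _ = δ * D ^ (d - 1) * M * ∏ i, v (m i) := by ring
  have hnear : ‖∑ m ∈ S.erase 0, T m‖ ≤ C ^ d * ∑ m ∈ S.erase 0, ‖U m‖ := by
    rw [mul_sum]
    refine (norm_sum_le _ _).trans (sum_le_sum fun m _ => ?_)
    rw [norm_mul, norm_prod]
    gcongr
    exact (prod_le_prod (fun _ _ => norm_nonneg _) fun i _ => hC (m i)).trans_eq (by simp)
  have hsplit : ∑' m, T m - w 0 ^ d * U 0 =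
      ∑ m ∈ S.erase 0, T m + (∑' m, T m - ∑ m ∈ S, T m) := by
    have h0 : (0 : Fin d → ℤ) ∈ S := by simp [S]
    rw [← add_sum_erase S T h0]
    simp only [T, Pi.zero_apply, prod_const, card_univ, Fintype.card_fin]
    ring
  rw [hsplit, ← tsum_mul_left]
  exact (norm_add_le _ _).trans (add_le_add hnear htail)

end Tail

section SchwartzDecay

lemma summable_inv_one_add_sq_int : Summable fun k : ℤ => (1 + (k : ℝ) ^ 2)⁻¹ := by
  refine (Real.summable_one_div_int_pow.mpr one_lt_two).of_norm_bounded_eventually ?_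
  filter_upwards [(Set.finite_singleton (0 : ℤ)).compl_mem_cofinite] with k hk
  have hk' : (k : ℝ) ≠ 0 := by exact_mod_cast hk
  rw [Real.norm_of_nonneg (by positivity), ← one_div]
  exact one_div_le_one_div_of_le (by positivity) (by linarith)

variable (g : 𝓢(ℝ, ℂ))

lemma exists_abs_pow_mul_norm_lattice_le (B : ℕ) :
    ∃ D : ℝ, 0 < D ∧ ∀ q ρ : ℝ, 1 ≤ q → 1 ≤ q * ρ ^ 2 → ∀ k : ℤ,
      |ρ * k| ^ B * ‖g (ρ * k)‖ ≤ D * q * (1 + (k : ℝ) ^ 2)⁻¹ := by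
  obtain ⟨C, hC, h⟩ := exists_abs_pow_mul_norm_le g B
  obtain ⟨C', hC', h'⟩ := exists_abs_pow_mul_norm_le g (B + 2)
  refine ⟨C + C', by positivity, fun q ρ hq hρ k => ?_⟩
  rw [← div_eq_mul_inv, le_div_iff₀ (by positivity)]
  calc |ρ * k| ^ B * ‖g (ρ * k)‖ * (1 + (k : ℝ) ^ 2)
      ≤ |ρ * k| ^ B * ‖g (ρ * k)‖ * (q + q * ρ ^ 2 * (k : ℝ) ^ 2) := by
        gcongr
        exact le_mul_of_one_le_left (sq_nonneg _) hρ
    _ = q * (|ρ * k| ^ B * ‖g (ρ * k)‖ + |ρ * k| ^ (B + 2) * ‖g (ρ * k)‖) := by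
        rw [pow_add, sq_abs]
        ring
    _ ≤ q * (C + C') := by gcongr; exacts [h _, h' _]
    _ = (C + C') * q := mul_comm _ _

lemma exists_norm_lattice_le_of_far {ε : ℝ} (hε : 0 < ε) (a : ℕ) :
    ∃ D : ℝ, 0 < D ∧ ∀ q ρ : ℝ, 1 ≤ q → q ^ (-(1 / 2) + ε) ≤ ρ → 1 ≤ q * ρ ^ 2 →
      ∀ k : ℤ, q ^ (1 / 2 - ε / 2) ≤ |(k : ℝ)| →
        ‖g (ρ * k)‖ ≤ D / q ^ a * (1 + (k : ℝ) ^ 2)⁻¹ := by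
  obtain ⟨B, hB⟩ := exists_nat_ge ((a + 1) / (ε / 2))
  obtain ⟨D, hD, h⟩ := exists_abs_pow_mul_norm_lattice_le g B
  refine ⟨D, hD, fun q ρ hq hρ hρ' k hk => ?_⟩
  have hq0 : 0 < q := by linarith
  have hlow : q ^ (ε / 2) ≤ |ρ * k| := by
    rw [abs_mul]
    calc q ^ (ε / 2) = q ^ (-(1 / 2) + ε) * q ^ (1 / 2 - ε / 2) := by
          rw [← Real.rpow_add hq0]
          congr 1
          ring
      _ ≤ |ρ| * |(k : ℝ)| := by
          gcongr
          exact hρ.trans (le_abs_self ρ)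
  have hpow : q ^ (a + 1) ≤ |ρ * k| ^ B := by
    calc q ^ (a + 1) = q ^ ((a + 1 : ℕ) : ℝ) := (Real.rpow_natCast _ _).symm
      _ ≤ q ^ (ε / 2 * B) := by
          refine Real.rpow_le_rpow_of_exponent_le hq ?_
          rw [div_le_iff₀ (by positivity)] at hB
          push_cast
          linarith
      _ = (q ^ (ε / 2)) ^ B := by rw [Real.rpow_mul hq0.le, Real.rpow_natCast]
      _ ≤ |ρ * k| ^ B := by gcongr
  have hle := (mul_le_mul_of_nonneg_right hpow (norm_nonneg _)).trans (h q ρ hq hρ' k)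
  calc ‖g (ρ * k)‖ = q ^ (a + 1) * ‖g (ρ * k)‖ / q ^ (a + 1) := by field_simp
    _ ≤ D * q * (1 + (k : ℝ) ^ 2)⁻¹ / q ^ (a + 1) := by gcongr
    _ = D / q ^ a * (1 + (k : ℝ) ^ 2)⁻¹ := by
        field_simp
        ring

lemma one_le_mul_sq_of_rpow_le {q ρ ε : ℝ} (hε : 0 ≤ ε) (hq : 1 ≤ q)
    (hρ : q ^ (-(1 / 2) + ε) ≤ ρ) : 1 ≤ q * ρ ^ 2 := by
  have hq0 : 0 < q := by linarith
  calc 1 ≤ q ^ (2 * ε) := Real.one_le_rpow hq (by positivity)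
    _ = q * (q ^ (-(1 / 2) + ε)) ^ 2 := by
        rw [← Real.rpow_mul_natCast hq0.le]
        nth_rw 2 [← Real.rpow_one q]
        rw [← Real.rpow_add hq0]
        congr 1
        push_cast
        ring
    _ ≤ q * ρ ^ 2 := by gcongr

end SchwartzDecay

section Asymptotics

lemma log_natCast_le_mul_log {b : ℝ} (hb : 1 ≤ b) {R n : ℕ} (hR : R ≤ b ^ n) :
    Real.log R ≤ n * Real.log b := by
  rcases Nat.eq_zero_or_pos R with rfl | hR0
  · have := Real.log_nonneg hb
    simp only [Nat.cast_zero, Real.log_zero]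
    positivity
  · rw [← Real.log_pow]
    exact Real.log_le_log (by exact_mod_cast hR0) hR

lemma rpow_mul_pow_sub_half_le {b : ℝ} (hb : 1 ≤ b) (ε : ℝ) (n : ℕ) :
    (b ^ n) ^ (1 / 2 - ε / 2) * b ^ (2 * n - n / 2) ≤ b * (b ^ n) ^ 2 * (b ^ (-(ε / 2))) ^ n := by
  have hb0 : 0 < b := by linarith
  have hhalf : (n : ℝ) ≤ 2 * (n / 2 : ℕ) + 1 := by
    exact_mod_cast (by omega : n ≤ 2 * (n / 2) + 1)
  have hsub : ((2 * n - n / 2 : ℕ) : ℝ) = 2 * n - (n / 2 : ℕ) := by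
    rw [Nat.cast_sub (by omega)]
    push_cast
    rfl
  calc (b ^ n) ^ (1 / 2 - ε / 2) * b ^ (2 * n - n / 2)
      = b ^ (n * (1 / 2 - ε / 2) + (2 * n - (n / 2 : ℕ))) := by
        rw [← Real.rpow_natCast, ← Real.rpow_natCast, ← Real.rpow_mul hb0.le, ← Real.rpow_add hb0,
          hsub]
    _ ≤ b ^ (1 + n * 2 + -(ε / 2) * n) := Real.rpow_le_rpow_of_exponent_le hb (by linarith)
    _ = b * (b ^ n) ^ 2 * (b ^ (-(ε / 2))) ^ n := by
        rw [Real.rpow_add hb0, Real.rpow_add hb0, Real.rpow_one, Real.rpow_mul hb0.le,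
          Real.rpow_mul hb0.le, Real.rpow_natCast, Real.rpow_natCast, Real.rpow_ofNat]

lemma mul_log_mul_pow_sub_half_le {b ε : ℝ} (hb : 1 ≤ b) (hε : 0 < ε) {n R : ℕ}
    (hR : R ≤ (b ^ n) ^ (1 / 2 - ε / 2)) :
    n * R * (1 + Real.log R) * b ^ (2 * n - n / 2) ≤
      b * (b ^ n) ^ 2 * (n * (1 + n * Real.log b) * (b ^ (-(ε / 2))) ^ n) := by
  have hlogb := Real.log_nonneg hb
  have hlog : Real.log R ≤ n * Real.log b := by
    refine log_natCast_le_mul_log hb (hR.trans ?_)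
    simpa using Real.rpow_le_rpow_of_exponent_le (one_le_pow₀ hb (n := n))
      (by linarith : 1 / 2 - ε / 2 ≤ 1)
  calc n * R * (1 + Real.log R) * b ^ (2 * n - n / 2)
      ≤ n * (b ^ n) ^ (1 / 2 - ε / 2) * (1 + n * Real.log b) * b ^ (2 * n - n / 2) := by gcongr
    _ = n * (1 + n * Real.log b) * ((b ^ n) ^ (1 / 2 - ε / 2) * b ^ (2 * n - n / 2)) := by ring
    _ ≤ n * (1 + n * Real.log b) * (b * (b ^ n) ^ 2 * (b ^ (-(ε / 2))) ^ n) := by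
        exact mul_le_mul_of_nonneg_left (rpow_mul_pow_sub_half_le hb ε n) (by positivity)
    _ = b * (b ^ n) ^ 2 * (n * (1 + n * Real.log b) * (b ^ (-(ε / 2))) ^ n) := by ring

lemma eventually_mul_floor_sq_lt_pow {p : ℕ} (hp : 1 < p) {ε : ℝ} (hε : 0 < ε) (H : ℕ) :
    ∀ᶠ n : ℕ in atTop, H * ⌊((p : ℝ) ^ n) ^ (1 / 2 - ε / 2)⌋₊ ^ 2 < p ^ (n - 1) := by
  have hp1 : (1 : ℝ) < p := by exact_mod_cast hp
  have htend : Tendsto (fun n : ℕ => ((p : ℝ) ^ n) ^ ε) atTop atTop :=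
    (tendsto_rpow_atTop hε).comp (tendsto_pow_atTop_atTop_of_one_lt hp1)
  filter_upwards [htend.eventually_gt_atTop (H * p : ℝ), eventually_ne_atTop 0] with n hn hn0
  have hq0 : (0 : ℝ) < (p : ℝ) ^ n := by positivity
  have hfloor := Nat.floor_le (Real.rpow_nonneg hq0.le (1 / 2 - ε / 2))
  set R := ⌊((p : ℝ) ^ n) ^ (1 / 2 - ε / 2)⌋₊
  have hsq : (((p : ℝ) ^ n) ^ (1 / 2 - ε / 2)) ^ 2 * ((p : ℝ) ^ n) ^ ε = (p : ℝ) ^ n := by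
    rw [← Real.rpow_mul_natCast hq0.le, ← Real.rpow_add hq0]
    convert Real.rpow_one _ using 2
    push_cast
    ring
  have hlt : (H : ℝ) * R ^ 2 * p < (p : ℝ) ^ (n - 1) * p := by
    calc (H : ℝ) * R ^ 2 * p = R ^ 2 * (H * p) := by ring
      _ ≤ (((p : ℝ) ^ n) ^ (1 / 2 - ε / 2)) ^ 2 * (H * p) := by gcongr
      _ < (((p : ℝ) ^ n) ^ (1 / 2 - ε / 2)) ^ 2 * ((p : ℝ) ^ n) ^ ε := by gcongr
      _ = (p : ℝ) ^ (n - 1) * p := by rw [hsq, ← pow_succ, Nat.sub_add_cancel (by omega)]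
  exact_mod_cast lt_of_mul_lt_mul_right hlt (by positivity)

lemma tendsto_mul_one_add_mul_pow_zero {r : ℝ} (hr : |r| < 1) (c : ℝ) :
    Tendsto (fun n : ℕ => n * (1 + n * c) * r ^ n) atTop (nhds 0) := by
  have h := (tendsto_pow_const_mul_const_pow_of_abs_lt_one 1 hr).add
    ((tendsto_pow_const_mul_const_pow_of_abs_lt_one 2 hr).const_mul c)
  rw [mul_zero, add_zero] at h
  exact h.congr fun n => by ring

end Asymptotics

section MainTerm

open Finset

lemma norm_unitZeroSum_le_norm_zero {ι : Type*} [Fintype ι] (q : ℕ) [NeZero q] (α m : ι → ℤ) :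
    ‖unitZeroSum q α m‖ ≤ ‖unitZeroSum q α 0‖ := by
  rw [unitZeroSum_zero, Complex.norm_natCast, unitZeroSum]
  refine (norm_sum_le _ _).trans_eq ?_
  simp only [AddChar.norm_apply, sum_const, nsmul_one]

variable {p : ℕ} [hp : Fact p.Prime] {α : Fin 3 → ℤ}

/-- The density of the unit zeros modulo a power of `p` of the ternary diagonal form with
coefficients `α`, called `C_p(α₁, α₂, α₃)` in the paper. -/
noncomputable def unitZeroDensity (p : ℕ) [Fact p.Prime] (α : Fin 3 → ℤ) : ℂ :=
  (p - (2 + legendreSym p (-(α 0 * α 1)) + legendreSym p (-(α 0 * α 2)) +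
    legendreSym p (-(α 1 * α 2)))) * (p - 1) / p ^ 2

lemma unitZeroSum_zero_eq_mul_unitZeroDensity {n : ℕ} (hn : n ≠ 0) (hp2 : 2 < p)
    (hα : ∀ i, ¬ (p : ℤ) ∣ α i) :
    unitZeroSum (p ^ n) α 0 = ((p : ℂ) ^ n) ^ 2 * unitZeroDensity p α := by
  have hp0 : (p : ℂ) ≠ 0 := by exact_mod_cast hp.out.ne_zero
  obtain ⟨n, rfl⟩ := Nat.exists_eq_succ_of_ne_zero hn
  rw [unitZeroSum_prime_pow_zero hn hp2 hα, unitZeroDensity, Nat.succ_sub_one]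
  field_simp
  rw [Nat.succ_eq_add_one]
  ring

variable (g : 𝓢(ℝ, ℂ)) {ε : ℝ}

lemma exists_norm_tsum_schwartz_mul_unitZeroSum_sub_le (hε : 0 < ε) (hp2 : 2 < p)
    (hα : ∀ i, ¬ (p : ℤ) ∣ α i) :
    ∃ C C' : ℝ, 0 ≤ C ∧ ∀ (n R : ℕ) (ρ : ℝ), ((p : ℝ) ^ n) ^ (-(1 / 2) + ε) ≤ ρ →
      ((p : ℝ) ^ n) ^ (1 / 2 - ε / 2) < R + 1 →
      diagHeight (dualCoeff α) * R ^ 2 < p ^ (n - 1) →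
      ‖∑' m : Fin 3 → ℤ, (∏ i, g (ρ * m i)) * unitZeroSum (p ^ n) α m -
          g 0 ^ 3 * unitZeroSum (p ^ n) α 0‖ ≤
        C * (n * R * (1 + Real.log R) * (p : ℝ) ^ (2 * n - n / 2)) +
          C' * (‖unitZeroSum (p ^ n) α 0‖ / p ^ n) := by
  obtain ⟨B, hB0, hB⟩ := exists_abs_pow_mul_norm_le g 0
  obtain ⟨D, hD0, hD⟩ := exists_abs_pow_mul_norm_lattice_le g 0
  obtain ⟨δ, hδ0, hδ⟩ := exists_norm_lattice_le_of_far g hε 3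
  simp only [pow_zero, one_mul] at hB hD
  refine ⟨B ^ 3 * (8 * p * diagHeight (dualCoeff α)),
    δ * D ^ 2 * ∑' m : Fin 3 → ℤ, ∏ i, (1 + (m i : ℝ) ^ 2)⁻¹, by positivity,
    fun n R ρ hρ hR hH => ?_⟩
  have hq : (1 : ℝ) ≤ (p : ℝ) ^ n := one_le_pow₀ (by exact_mod_cast hp.out.one_le)
  have : (0 : ℝ) < (p : ℝ) ^ n := by linarith
  have hρ' := one_le_mul_sq_of_rpow_le hε.le hq hρ
  have hbound := norm_tsum_prod_mul_sub_le (d := 3) (w := fun k : ℤ => g (ρ * k)) (R := R)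
    (U := unitZeroSum (p ^ n) α) summable_inv_one_add_sq_int (fun k => by positivity)
    (by positivity : 0 ≤ D * p ^ n) (by positivity : 0 ≤ δ / ((p : ℝ) ^ n) ^ 3)
    (norm_unitZeroSum_le_norm_zero _ α) (fun k => hB _) (hD _ _ hq hρ')
    (fun k hk => hδ _ _ hq hρ hρ' k (hR.le.trans (by exact_mod_cast hk)))
  rw [Int.cast_zero, mul_zero] at hbound
  refine hbound.trans (add_le_add ?_ (le_of_eq ?_))
  · have hnear := sum_norm_unitZeroSum_le hp2 hα hH
      (S := (Fintype.piFinset fun _ => Icc (-R : ℤ) R).erase 0) fun m hm => by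
        simpa only [mem_erase, Fintype.mem_piFinset, mem_Icc, ← abs_le] using hm
    calc _ ≤ _ := mul_le_mul_of_nonneg_left hnear (by positivity)
      _ = _ := by ring
  · simp only [Nat.add_one_sub_one]
    field_simp

lemma exists_eventually_norm_tsum_schwartz_mul_unitZeroSum_div_sub_le (hε : 0 < ε) (hp2 : 2 < p)
    (hα : ∀ i, ¬ (p : ℤ) ∣ α i) :
    ∃ C C' : ℝ, ∀ᶠ n : ℕ in atTop, ∀ ρ : ℝ, ((p : ℝ) ^ n) ^ (-(1 / 2) + ε) ≤ ρ →
      ‖(∑' m : Fin 3 → ℤ, (∏ i, g (ρ * m i)) * unitZeroSum (p ^ n) α m) / ((p : ℂ) ^ n) ^ 2 -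
          g 0 ^ 3 * unitZeroDensity p α‖ ≤
        C * (n * (1 + n * Real.log p) * ((p : ℝ) ^ (-(ε / 2))) ^ n) + C' * ((p : ℝ)⁻¹) ^ n := by
  have hp1 : (1 : ℝ) < p := by exact_mod_cast hp.out.one_lt
  obtain ⟨C, C', hC, hbound⟩ := exists_norm_tsum_schwartz_mul_unitZeroSum_sub_le g hε hp2 hα
  refine ⟨C * p, C' * ‖unitZeroDensity p α‖, ?_⟩
  filter_upwards [eventually_mul_floor_sq_lt_pow hp.out.one_lt hε (diagHeight (dualCoeff α)),
    eventually_ne_atTop 0] with n hn hn0 ρ hρ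
  have hq0 : (0 : ℝ) < (p : ℝ) ^ n := by positivity
  have hqC : (p : ℂ) ^ n ≠ 0 := by exact_mod_cast hq0.ne'
  have hzero := unitZeroSum_zero_eq_mul_unitZeroDensity hn0 hp2 hα
  have hnear := mul_log_mul_pow_sub_half_le hp1.le hε
    (Nat.floor_le (Real.rpow_nonneg hq0.le (1 / 2 - ε / 2)))
  have hsub (T : ℂ) : T / ((p : ℂ) ^ n) ^ 2 - g 0 ^ 3 * unitZeroDensity p α =
      (T - g 0 ^ 3 * unitZeroSum (p ^ n) α 0) / ((p : ℂ) ^ n) ^ 2 := by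
    rw [hzero]
    field_simp
  rw [hsub, norm_div, norm_pow, norm_pow, Complex.norm_natCast, div_le_iff₀ (by positivity)]
  refine (hbound n _ _ hρ (Nat.lt_floor_add_one _) hn).trans ?_
  rw [hzero, norm_mul, norm_pow, norm_pow, Complex.norm_natCast, add_mul]
  refine add_le_add ((mul_le_mul_of_nonneg_left hnear hC).trans_eq (by ring)) (le_of_eq ?_)
  rw [inv_pow]
  ring

lemma tendsto_tsum_schwartz_mul_unitZeroSum (hε : 0 < ε) (hp2 : 2 < p)
    (hα : ∀ i, ¬ (p : ℤ) ∣ α i) {ρ : ℕ → ℝ}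
    (hρ : ∀ n, ((p : ℝ) ^ n) ^ (-(1 / 2) + ε) ≤ ρ n) :
    Tendsto (fun n => (∑' m : Fin 3 → ℤ, (∏ i, g (ρ n * m i)) * unitZeroSum (p ^ n) α m) /
      ((p : ℂ) ^ n) ^ 2) atTop (nhds (g 0 ^ 3 * unitZeroDensity p α)) := by
  have hp1 : (1 : ℝ) < p := by exact_mod_cast hp.out.one_lt
  obtain ⟨C, C', hbound⟩ :=
    exists_eventually_norm_tsum_schwartz_mul_unitZeroSum_div_sub_le g hε hp2 hα
  have hr : |(p : ℝ) ^ (-(ε / 2))| < 1 := by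
    rw [abs_of_nonneg (by positivity)]
    exact Real.rpow_lt_one_of_one_lt_of_neg hp1 (by linarith)
  have herror := ((tendsto_mul_one_add_mul_pow_zero hr (Real.log p)).const_mul C).add
    ((tendsto_pow_atTop_nhds_zero_of_lt_one (by positivity)
      (inv_lt_one_of_one_lt₀ hp1)).const_mul C')
  rw [mul_zero, mul_zero, add_zero] at herror
  rw [tendsto_iff_norm_sub_tendsto_zero]
  exact squeeze_zero' (.of_forall fun n => norm_nonneg _) (hbound.mono fun n hn => hn _ (hρ n))
    herror

end MainTerm

section Count

lemma tsum_prod_prod_eq_tsum_fin_three {κ M : Type*} [AddCommMonoid M] [TopologicalSpace M]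
    (f : κ × κ × κ → M) : ∑' x, f x = ∑' x : Fin 3 → κ, f (x 0, x 1, x 2) := by
  let e : (Fin 3 → κ) ≃ κ × κ × κ :=
    { toFun x := (x 0, x 1, x 2)
      invFun y := ![y.1, y.2.1, y.2.2]
      left_inv x := by ext i; fin_cases i <;> rfl
      right_inv _ := rfl }
  exact (e.tsum_eq f).symm

variable {p : ℕ} [hp : Fact p.Prime]

lemma intCast_mem_unitZeros_iff {n : ℕ} (hn : n ≠ 0) (α x : Fin 3 → ℤ) :
    (fun i => (x i : ZMod (p ^ n))) ∈ unitZeros (fun i => (α i : ZMod (p ^ n))) ↔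
      Int.gcd (x 0 * x 1 * x 2) p = 1 ∧
        (p : ℤ) ^ n ∣ α 0 * x 0 ^ 2 + α 1 * x 1 ^ 2 + α 2 * x 2 ^ 2 := by
  have hpZ : Prime (p : ℤ) := Nat.prime_iff_prime_int.mp hp.out
  have hgcd : Int.gcd (x 0 * x 1 * x 2) p = 1 ↔ ∀ i, ¬ (p : ℤ) ∣ x i := by
    rw [← Int.isCoprime_iff_gcd_eq_one, isCoprime_comm, Prime.coprime_iff_not_dvd hpZ,
      hpZ.dvd_mul, hpZ.dvd_mul, Fin.forall_fin_succ, Fin.forall_fin_two]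
    tauto
  have hdvd : (p : ℤ) ^ n ∣ α 0 * x 0 ^ 2 + α 1 * x 1 ^ 2 + α 2 * x 2 ^ 2 ↔
      diagForm (fun i => (α i : ZMod (p ^ n))) (fun i => (x i : ZMod (p ^ n))) = 0 := by
    rw [← Nat.cast_pow, ← ZMod.intCast_zmod_eq_zero_iff_dvd, diagForm, Fin.sum_univ_three]
    push_cast
    rfl
  simp only [mem_unitZeros, isUnit_intCast_zmod_prime_pow_iff hn, hgcd, hdvd]

lemma smoothed_count_eq_tsum_unitZeroSum (f : 𝓢(ℝ, ℂ)) (α : Fin 3 → ℤ) {n : ℕ} (hn : n ≠ 0)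
    {N : ℝ} (hN : 0 < N) :
    (p : ℂ) ^ n / (N : ℂ) ^ 3 * ∑' x : ℤ × ℤ × ℤ,
        (if Int.gcd (x.1 * x.2.1 * x.2.2) p = 1 ∧
            (p : ℤ) ^ n ∣ α 0 * x.1 ^ 2 + α 1 * x.2.1 ^ 2 + α 2 * x.2.2 ^ 2
          then f (x.1 / N) * f (x.2.1 / N) * f (x.2.2 / N) else 0) =
      (∑' m : Fin 3 → ℤ, (∏ i, 𝓕 f (N / p ^ n * m i)) * unitZeroSum (p ^ n) α m) /
        ((p : ℂ) ^ n) ^ 2 := by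
  have hp0 : (p : ℂ) ≠ 0 := by exact_mod_cast hp.out.ne_zero
  have hN0 : (N : ℂ) ≠ 0 := by exact_mod_cast hN.ne'
  have hpoisson := tsum_ite_mem_eq_tsum_fourier f hN
    (unitZeros fun i => (α i : ZMod (p ^ n)))
  simp only [intCast_mem_unitZeros_iff hn, Fin.prod_univ_three] at hpoisson
  rw [tsum_prod_prod_eq_tsum_fin_three, hpoisson]
  simp only [unitZeroSum, Fin.prod_univ_three]
  push_cast
  field_simp

lemma fourier_schwartz_zero (f : 𝓢(ℝ, ℂ)) : 𝓕 f 0 = ∫ x, f x := by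
  rw [SchwartzMap.fourier_coe, Real.fourier_real_eq_integral_exp_smul]
  simp

end Count

theorem smoothed_count_fixed_coefficients_general
    (ε : ℝ) (hε : 0 < ε) (p : ℕ) [hp : Fact p.Prime] (hp2 : 2 < p)
    (α₁ α₂ α₃ : ℤ)
    (h1 : ¬ (p : ℤ) ∣ α₁) (h2 : ¬ (p : ℤ) ∣ α₂) (h3 : ¬ (p : ℤ) ∣ α₃)
    (Φ : 𝓢(ℝ, ℂ))
    (N : ℕ → ℝ) (hN : ∀ n : ℕ, ((p : ℝ) ^ n) ^ ((1 : ℝ) / 2 + ε) ≤ N n) :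
    Tendsto (fun n : ℕ =>
        ((p : ℂ) ^ n / (N n : ℂ) ^ 3) *
          ∑' x : ℤ × ℤ × ℤ,
            (if Int.gcd (x.1 * x.2.1 * x.2.2) p = 1 ∧
                (p : ℤ) ^ n ∣ α₁ * x.1 ^ 2 + α₂ * x.2.1 ^ 2 + α₃ * x.2.2 ^ 2
             then Φ ((x.1 : ℝ) / N n) * Φ ((x.2.1 : ℝ) / N n) * Φ ((x.2.2 : ℝ) / N n)
             else 0))
      atTop
      (nhds ((∫ x : ℝ, Φ x) ^ 3 *
        (((p : ℂ) - ((2 + legendreSym p (-(α₁ * α₂)) + legendreSym p (-(α₁ * α₃))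
            + legendreSym p (-(α₂ * α₃)) : ℤ) : ℂ)) * ((p : ℂ) - 1) / (p : ℂ) ^ 2))) := by
  have hα : ∀ i, ¬ (p : ℤ) ∣ ![α₁, α₂, α₃] i :=
    Fin.forall_fin_succ.2 ⟨h1, Fin.forall_fin_two.2 ⟨h2, h3⟩⟩
  have hq (n : ℕ) : (0 : ℝ) < (p : ℝ) ^ n := pow_pos (by exact_mod_cast hp.out.pos) n
  have hρ (n : ℕ) : ((p : ℝ) ^ n) ^ (-(1 / 2) + ε) ≤ N n / (p : ℝ) ^ n := by
    rw [le_div_iff₀ (hq n), ← Real.rpow_add_one (hq n).ne']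
    exact (congrArg _ (by ring)).trans_le (hN n)
  have hlim := tendsto_tsum_schwartz_mul_unitZeroSum (𝓕 Φ) hε hp2 hα hρ
  rw [fourier_schwartz_zero] at hlim
  simp only [unitZeroDensity] at hlim
  push_cast
  refine hlim.congr' ?_
  filter_upwards [eventually_ne_atTop 0] with n hn
  exact (smoothed_count_eq_tsum_unitZeroSum Φ ![α₁, α₂, α₃] hn
    ((Real.rpow_pos_of_pos (hq n) _).trans_le (hN n))).symm

/-- For fixed coefficients, the smoothed count of unit solutions of
`α₁x₁² + α₂x₂² + α₃x₃² ≡ 0 (mod pⁿ)`, normalized by `q/N³`, converges to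
`Φ̂(0)³ · C_p(α₁,α₂,α₃)` as `n → ∞`, provided `N ≥ q^{1/2+ε}`. -/
theorem smoothed_count_fixed_coefficients
    (ε : ℝ) (hε : 0 < ε) (p : ℕ) [hp : Fact p.Prime] (hp2 : 2 < p)
    (α₁ α₂ α₃ : ℤ)
    (h1 : ¬ (p : ℤ) ∣ α₁) (h2 : ¬ (p : ℤ) ∣ α₂) (h3 : ¬ (p : ℤ) ∣ α₃)
    (hs : (2 + legendreSym p (-(α₁ * α₂)) + legendreSym p (-(α₁ * α₃))
            + legendreSym p (-(α₂ * α₃))) < (p : ℤ))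
    (Φ : SchwartzMap ℝ ℝ) (hΦ : ∀ x, 0 ≤ Φ x)
    (N : ℕ → ℝ) (hN : ∀ n : ℕ, ((p : ℝ) ^ n) ^ ((1 : ℝ) / 2 + ε) ≤ N n) :
    Tendsto (fun n : ℕ =>
        ((p : ℝ) ^ n / (N n) ^ 3) *
          ∑' x : ℤ × ℤ × ℤ,
            (if Int.gcd (x.1 * x.2.1 * x.2.2) p = 1 ∧
                (p : ℤ) ^ n ∣ α₁ * x.1 ^ 2 + α₂ * x.2.1 ^ 2 + α₃ * x.2.2 ^ 2
             then Φ ((x.1 : ℝ) / N n) * Φ ((x.2.1 : ℝ) / N n) * Φ ((x.2.2 : ℝ) / N n)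
             else 0))
      atTop
      (nhds ((∫ x : ℝ, Φ x) ^ 3 *
        (((p : ℝ) - ((2 + legendreSym p (-(α₁ * α₂)) + legendreSym p (-(α₁ * α₃))
            + legendreSym p (-(α₂ * α₃)) : ℤ) : ℝ)) * ((p : ℝ) - 1) / (p : ℝ) ^ 2))) := by
  rw [← tendsto_ofReal_iff]
  simpa [Complex.ofReal_tsum, apply_ite Complex.ofReal, integral_complex_ofReal] using
    smoothed_count_fixed_coefficients_general ε hε p hp2 α₁ α₂ α₃ h1 h2 h3
      (Φ.postcompCLM Complex.ofRealCLM) N hN
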